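/- arXiv:1409.6243 — 2 statements merged into one kernel-verified Lean document; each statement's English description precedes it below -/
import Mathlib

section
/- Let t ≥ 1 be an integer, let q ∈ ℂ with 0 < |q| < 1, and let x ∈ ℂ with |q| < |x| < |q|^{-1}. Then q^{-t} Σ_{1 ≤ k_1 ≤ … ≤ k_t} (xq;q)_{k_t-1} (q/x;q)_{k_t-1} q^{k_t} Π_{i=1}^{t-1} q^{k_i^2} [k_{i+1} + k_i - i + 2Σ_{j=1}^{i-1} k_j choose k_{i+1} - k_i]_q = -q^{-t/2 - 1/8} · ((xq;q)_∞ (q/x;q)_∞ / ((q;q)_∞)^2) · ( Σ_{r,s,u ≥ 0, r ≢ s (mod 2)} + Σ_{r,s,u < 0, r ≢ s (mod 2)} ) (-1)^{(r-s-1)/2} x^u q^{r^2/8 + (4t+3)rs/4 + s^2/8 + (2+t)r/2 + t s/2 + u(r+s+1)/2}, where each of the series converges absolutely. Note that for integers r ≢ s (mod 2), the quantities (r-s-1)/2 and (r+s+1)/2 are integers, and the total exponent of q in each term (including the prefactor exponent -t/2 - 1/8) is an integer. -/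
open Finset

/-- The finite q-Pochhammer symbol `(a;q)_n`. -/
noncomputable def qPoch (q a : ℂ) (n : ℕ) : ℂ := ∏ j ∈ Finset.range n, (1 - a * q ^ j)

/-- The infinite q-Pochhammer symbol `(a;q)_∞`. -/
noncomputable def qPochInf (q a : ℂ) : ℂ := ∏' j : ℕ, (1 - a * q ^ j)

/-- The Gaussian binomial coefficient `[n choose k]_q`, zero outside `0 ≤ k ≤ n`. -/
noncomputable def qBinom (q : ℂ) (n k : ℤ) : ℂ :=
  if 0 ≤ k ∧ k ≤ n then
    ∏ j ∈ Finset.range k.toNat, (1 - q ^ (n - k + (j : ℤ) + 1)) / (1 - q ^ ((j : ℤ) + 1))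
  else 0

/-- The product `Π_{i=1}^{t-1} q^{k_i^2} [k_{i+1}+k_i-i+2Σ_{j<i}k_j choose k_{i+1}-k_i]_q`
appearing in the generalized U-function `U_t` (tuple of length `t+1`, i.e. the paper's
`t` equals `t+1`). -/
noncomputable def UtProd (q : ℂ) (t : ℕ) (K : Fin (t+1) → ℕ) : ℂ :=
  ∏ i : Fin t, (q ^ (K i.castSucc ^ 2) *
    qBinom q ((K i.succ : ℤ) + (K i.castSucc : ℤ) - ((i : ℕ) + 1)
        + 2 * ∑ j ∈ Finset.univ.filter (fun j : Fin (t+1) => (j : ℕ) < (i : ℕ)), (K j : ℤ))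
      ((K i.succ : ℤ) - (K i.castSucc : ℤ)))

/-- The summand of the multisum defining `U_t(-x;q)`. -/
noncomputable def UtTerm (q x : ℂ) (t : ℕ) (K : Fin (t+1) → ℕ) : ℂ :=
  qPoch q (x * q) (K (Fin.last t) - 1) * qPoch q (q / x) (K (Fin.last t) - 1) *
    q ^ (K (Fin.last t)) * UtProd q t K

/-- The Hecke-type triple-sum summand `(-1)^{(r-s-1)/2} x^u q^{E}` where the integer
exponent `E = r²/8 + (4T+3)rs/4 + s²/8 + (2+T)r/2 + Ts/2 + u(r+s+1)/2 - T/2 - 1/8`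
(the prefactor exponent `-T/2 - 1/8` has been absorbed, making the total exponent of
`q` an integer, as noted in the statement); the paper's `t` is `T`. -/
noncomputable def heckeTerm3 (q x : ℂ) (T : ℤ) (p : ℤ × ℤ × ℤ) : ℂ :=
  (-1 : ℂ) ^ ((p.1 - p.2.1 - 1) / 2) * x ^ p.2.2 *
    q ^ ((p.1 ^ 2 + p.2.1 ^ 2 + 2 * (4 * T + 3) * p.1 * p.2.1
          + 4 * (2 + T) * p.1 + 4 * T * p.2.1 - 4 * T - 1
          + 4 * p.2.2 * (p.1 + p.2.1 + 1)) / 8)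


section helpers

noncomputable def QQ (q : ℂ) (n : ℕ) : ℂ := ∏ j ∈ Finset.range n, (1 - q ^ (j + 1))

lemma QQ_zero (q : ℂ) : QQ q 0 = 1 := by simp [QQ]

lemma QQ_succ (q : ℂ) (n : ℕ) : QQ q (n + 1) = QQ q n * (1 - q ^ (n + 1)) := by
  simp [QQ, Finset.prod_range_succ]

def NR (q : ℂ) : Prop := q ≠ 0 ∧ ∀ n : ℕ, 1 - q ^ (n + 1) ≠ 0

lemma QQ_ne {q : ℂ} (h : NR q) (n : ℕ) : QQ q n ≠ 0 :=
  Finset.prod_ne_zero_iff.mpr fun j _ => h.2 j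

lemma qPoch_zero (q a : ℂ) : qPoch q a 0 = 1 := by simp [qPoch]

lemma qPoch_succ (q a : ℂ) (n : ℕ) : qPoch q a (n + 1) = qPoch q a n * (1 - a * q ^ n) := by
  simp [qPoch, Finset.prod_range_succ]

lemma qPoch_succ' (q a : ℂ) (n : ℕ) :
    qPoch q a (n + 1) = (1 - a) * qPoch q (a * q) n := by
  simp only [qPoch, Finset.prod_range_succ', pow_zero, mul_one]
  rw [mul_comm]
  congr 1
  apply Finset.prod_congr rfl
  intro j _
  ring

lemma qPoch_add (q a : ℂ) (n k : ℕ) :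
    qPoch q a (n + k) = qPoch q a n * qPoch q (a * q ^ n) k := by
  simp only [qPoch, Finset.prod_range_add]
  congr 1
  apply Finset.prod_congr rfl
  intro j _
  rw [pow_add]; ring

lemma qPoch_q (q : ℂ) (n : ℕ) : qPoch q q n = QQ q n := by
  simp only [qPoch, QQ]
  apply Finset.prod_congr rfl
  intro j _
  rw [pow_succ]; ring

lemma qPoch_pow {q : ℂ} (h : NR q) (k n : ℕ) :
    qPoch q (q ^ (k + 1)) n = QQ q (k + n) / QQ q k := by
  rw [eq_div_iff (QQ_ne h k), ← qPoch_q, ← qPoch_q, qPoch_add, pow_succ]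
  rw [mul_comm (q ^ k) q]; ring

lemma qPoch_neg_zero {q : ℂ} (h : NR q) (n p : ℕ) (hp : n < p) :
    qPoch q (q ^ (-(n : ℤ))) p = 0 := by
  apply Finset.prod_eq_zero (Finset.mem_range.mpr hp)
  rw [← zpow_natCast, ← zpow_add₀ h.1]; simp

lemma qPoch_neg {q : ℂ} (h : NR q) (n p : ℕ) (hp : p ≤ n) :
    qPoch q (q ^ (-(n : ℤ))) p =
      ((-1) ^ p * q ^ (p.choose 2)) * q ^ (-((n * p : ℕ) : ℤ)) * (QQ q n / QQ q (n - p)) := by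
  have h0 := h.1
  induction p with
  | zero => simp [qPoch_zero, div_self (QQ_ne h n)]
  | succ p ih =>
    obtain ⟨k, rfl⟩ : ∃ k, n = k + (p + 1) := ⟨n - (p+1), by omega⟩
    rw [qPoch_succ, ih (by omega)]
    have e1 : k + (p + 1) - p = k + 1 := by omega
    have e2 : k + (p + 1) - (p + 1) = k := by omega
    rw [e1, e2, QQ_succ, Nat.choose_succ_succ' p 1]
    have := QQ_ne h k
    have := h.2 k
    simp only [Nat.choose_one_right, zpow_neg, zpow_natCast]
    field_simp
    ring

/-- core transformation -/
noncomputable def cA (q : ℂ) (n d : ℕ) : ℂ := qPoch q (q ^ (-(n : ℤ))) d * q ^ d / QQ q d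

lemma cA_zero (q : ℂ) (n : ℕ) : cA q n 0 = 1 := by simp [cA, qPoch_zero, QQ_zero]

lemma cA_big {q : ℂ} (h : NR q) (n : ℕ) : cA q n (n + 1) = 0 := by
  rw [cA, qPoch_neg_zero h n (n + 1) (by omega)]; simp

lemma cA_succ {q : ℂ} (h : NR q) (n d : ℕ) :
    cA q (n + 1) (d + 1) = cA q n (d + 1) - (q ^ n)⁻¹ * cA q n d := by
  have h0 := h.1
  have h1 := QQ_ne h d
  have h2 := h.2 d
  have e : q ^ (-((n + 1 : ℕ) : ℤ)) * q = q ^ (-(n : ℤ)) := by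
    rw [← zpow_add_one₀ h0]; congr 1; push_cast; ring
  simp only [cA]
  rw [qPoch_succ', e, qPoch_succ, QQ_succ]
  simp only [zpow_neg, zpow_natCast]
  field_simp
  ring

lemma cA_step {q : ℂ} (h : NR q) (n d : ℕ) :
    cA q n (d + 1) * (1 - q ^ (d + 1)) = cA q n d * (1 - (q ^ n)⁻¹ * q ^ d) * q := by
  have h0 := h.1
  have h1 := QQ_ne h d
  have h2 := h.2 d
  simp only [cA]
  rw [qPoch_succ, QQ_succ]
  simp only [zpow_neg, zpow_natCast]
  field_simp
  ring

lemma core {q : ℂ} (h : NR q) (n : ℕ) (C w : ℂ) :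
    ∑ d ∈ range (n + 1), cA q n d * (qPoch q C d * qPoch q w d) =
    ∑ j ∈ range (n + 1), QQ q n / (QQ q j * QQ q (n - j)) * qPoch q C j * w ^ j * C ^ (n - j) := by
  have h0 := h.1
  induction n generalizing C with
  | zero => simp [cA_zero, qPoch_zero, QQ_zero]
  | succ n ih =>
    have hR : ∑ j ∈ range (n + 1 + 1), QQ q (n + 1) / (QQ q j * QQ q (n + 1 - j)) * qPoch q C j
          * w ^ j * C ^ (n + 1 - j)
        = C * (∑ j ∈ range (n + 1), QQ q n / (QQ q j * QQ q (n - j)) * qPoch q C j * w ^ j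
            * C ^ (n - j)) + w * (1 - C) * (∑ j ∈ range (n + 1), QQ q n / (QQ q j * QQ q (n - j))
              * qPoch q (C * q) j * w ^ j * (C * q) ^ (n - j)) := by
      rw [Finset.mul_sum, Finset.mul_sum, Finset.sum_range_succ' (n := n + 1),
        Finset.sum_range_succ (n := n), Finset.sum_range_succ' (n := n)
          (f := fun j => C * (QQ q n / (QQ q j * QQ q (n - j)) * qPoch q C j * w ^ j
            * C ^ (n - j))), Finset.sum_range_succ (n := n)
          (f := fun j => w * (1 - C) * (QQ q n / (QQ q j * QQ q (n - j))
              * qPoch q (C * q) j * w ^ j * (C * q) ^ (n - j)))]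
      have hs : ∀ j ∈ range n,
          QQ q (n + 1) / (QQ q (j + 1) * QQ q (n + 1 - (j + 1))) * qPoch q C (j + 1)
          * w ^ (j + 1) * C ^ (n + 1 - (j + 1)) =
          C * (QQ q n / (QQ q (j + 1) * QQ q (n - (j + 1))) * qPoch q C (j + 1) * w ^ (j + 1)
            * C ^ (n - (j + 1))) + w * (1 - C) * (QQ q n / (QQ q j * QQ q (n - j))
              * qPoch q (C * q) j * w ^ j * (C * q) ^ (n - j)) := by
        intro j hj
        obtain ⟨k, rfl⟩ : ∃ k, n = j + 1 + k := ⟨n - (j+1), by have := mem_range.1 hj; omega⟩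
        have e1 : j + 1 + k + 1 - (j + 1) = k + 1 := by omega
        have e2 : j + 1 + k - (j + 1) = k := by omega
        have e3 : j + 1 + k - j = k + 1 := by omega
        rw [e1, e2, e3, qPoch_succ', QQ_succ q (j + 1 + k), QQ_succ q j, QQ_succ q k]
        have := QQ_ne h j
        have := QQ_ne h k
        have := h.2 j
        have := h.2 k
        field_simp
        ring
      rw [Finset.sum_congr rfl hs, Finset.sum_add_distrib]
      have := QQ_ne h n
      have := QQ_ne h (n + 1)
      have e5 : n + 1 - (n + 1) = 0 := by omega
      simp only [e5, Nat.sub_self, Nat.sub_zero, QQ_zero, qPoch_zero, qPoch_succ', pow_zero]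
      field_simp
      ring
    rw [hR, ← ih, ← ih, Finset.sum_range_succ', cA_zero]
    have hs : ∀ d ∈ range (n + 1), cA q (n + 1) (d + 1) * (qPoch q C (d + 1) * qPoch q w (d + 1))
        = cA q n (d + 1) * (qPoch q C (d + 1) * qPoch q w (d + 1))
          - (q ^ n)⁻¹ * cA q n d * (qPoch q C (d + 1) * qPoch q w (d + 1)) := by
      intro d _
      rw [cA_succ h]; ring
    rw [Finset.sum_congr rfl hs, Finset.sum_sub_distrib]
    have h3 : ∑ d ∈ range (n + 1), cA q n (d + 1) * (qPoch q C (d + 1) * qPoch q w (d + 1)) + 1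
        = ∑ d ∈ range (n + 1), cA q n d * (qPoch q C d * qPoch q w d) := by
      have := Finset.sum_range_succ' (fun d => cA q n d * (qPoch q C d * qPoch q w d)) (n + 1)
      rw [Finset.sum_range_succ, cA_big h] at this
      simp only [cA_zero, qPoch_zero] at this
      rw [zero_mul, add_zero] at this
      rw [this]; ring
    have hT : ∑ d ∈ range (n + 1), (cA q n (d + 1) * (1 - q ^ (d + 1)) * (q ^ (d + 1))⁻¹ *
        (qPoch q C (d + 1) * qPoch q w (d + 1)) - cA q n d * (1 - q ^ d) * (q ^ d)⁻¹ *
        (qPoch q C d * qPoch q w d)) = 0 := by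
      rw [Finset.sum_range_sub (fun d => cA q n d * (1 - q ^ d) * (q ^ d)⁻¹ *
        (qPoch q C d * qPoch q w d)), cA_big h]
      simp
    have hC : ∀ d, (1 - C) * qPoch q (C * q) d = qPoch q C d * (1 - C * q ^ d) := by
      intro d; rw [← qPoch_succ', qPoch_succ]
    have e4 : ∑ d ∈ range (n + 1), cA q n (d + 1) * (qPoch q C (d + 1) * qPoch q w (d + 1)) =
      ∑ d ∈ range (n + 1), cA q n d * (qPoch q C d * qPoch q w d) - 1 := by rw [← h3]; ring
    rw [e4]
    simp only [qPoch_zero]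
    rw [← sub_eq_zero, ← hT]
    have : ∀ A B D : ℂ, A - 1 - B + 1 * (1 * 1) - D = A - B - D := by intros; ring
    rw [this, Finset.mul_sum, Finset.mul_sum, ← Finset.sum_add_distrib,
      ← Finset.sum_sub_distrib, ← Finset.sum_sub_distrib]
    apply Finset.sum_congr rfl
    intro d _
    rw [cA_step h]
    have e6 : w * (1 - C) * (cA q n d * (qPoch q (C * q) d * qPoch q w d))
      = w * cA q n d * qPoch q w d * (qPoch q C d * (1 - C * q ^ d)) := by rw [← hC]; ring
    rw [e6, qPoch_succ, qPoch_succ]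
    field_simp
    ring

noncomputable def gb (q : ℂ) (a p b : ℕ) : ℂ :=
  if p ≤ b then QQ q (a + (b - p)) / (QQ q a * QQ q (b - p)) else 0

noncomputable def TT (q : ℂ) (m : ℕ) (f : ℕ → ℕ → ℂ) : ℕ → ℕ → ℂ := fun l p =>
  q ^ ((p + 1) ^ 2) * ∑ b ∈ range m, gb q (l + 2 * p) p b * f (l + 2 * p + 1) b

noncomputable def WW (q : ℂ) (m c : ℕ) : ℕ → ℕ → ℂ := fun l p =>
  qPoch q (q ^ ((1 : ℤ) - m + c)) p * qPoch q (q ^ (m + c + 1)) p * q ^ (p + 1 + c * l)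

noncomputable def lam (q : ℂ) (m c : ℕ) : ℂ := q ^ ((m : ℤ) ^ 2 - c ^ 2 - c)

noncomputable def cf (q : ℂ) (m c d : ℕ) : ℂ :=
  QQ q (m - c - 1) / (QQ q d * QQ q (m - c - 1 - d)) * qPoch q (q ^ (m + c + 1)) d *
    (q ^ ((m + c) * d))⁻¹

lemma sum_shift (m p n : ℕ) (hm : p + n + 1 ≤ m) (f : ℕ → ℂ)
    (h1 : ∀ b < p, f b = 0) (h2 : ∀ b, p + n < b → b < m → f b = 0) :
    ∑ b ∈ range m, f b = ∑ d ∈ range (n + 1), f (p + d) := by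
  obtain ⟨k, rfl⟩ : ∃ k, m = p + ((n + 1) + k) := ⟨m - (p + n + 1), by omega⟩
  rw [Finset.sum_range_add, Finset.sum_range_add]
  rw [Finset.sum_eq_zero (s := range p) (fun b hb => h1 b (mem_range.1 hb)),
    Finset.sum_eq_zero (s := range k) (fun b hb => h2 _ (by omega) (by have := mem_range.1 hb; omega))]
  ring

lemma TT_WW {q : ℂ} (h : NR q) (m c l p : ℕ) (hc : c < m) :
    TT q m (WW q m c) l p = lam q m c * ∑ d ∈ range (m - c), cf q m c d * WW q m (c + d) l p := by
  have h0 := h.1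
  obtain ⟨n', rfl⟩ : ∃ n', m = c + n' + 1 := ⟨m - c - 1, by omega⟩
  have ez : ((1 : ℤ) - ((c + n' + 1 : ℕ) : ℤ) + (c : ℤ)) = -(n' : ℤ) := by push_cast; ring
  have er : c + n' + 1 - c = n' + 1 := by omega
  rw [er]
  by_cases hp : p ≤ n'
  swap
  · -- both sides vanish
    have z1 : TT q (c + n' + 1) (WW q (c + n' + 1) c) l p = 0 := by
      unfold TT
      rw [Finset.sum_eq_zero, mul_zero]
      intro b _
      unfold gb WW
      split_ifs with hb
      · rw [ez, qPoch_neg_zero h n' b (by omega)]; ring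
      · ring
    rw [z1, Finset.sum_eq_zero, mul_zero]
    intro d hd
    have hd := mem_range.1 hd
    have ez2 : ((1 : ℤ) - ((c + n' + 1 : ℕ) : ℤ) + ((c + d : ℕ) : ℤ)) = -((n' - d : ℕ) : ℤ) := by
      rw [Nat.cast_sub (by omega)]; push_cast; ring
    unfold WW
    rw [ez2, qPoch_neg_zero h (n' - d) p (by omega)]; ring
  · obtain ⟨n, rfl⟩ : ∃ n, n' = p + n := ⟨n' - p, by omega⟩
    unfold TT
    rw [sum_shift _ p n (by omega)]
    rotate_left
    · intro b hb
      unfold gb; rw [if_neg (by omega)]; ring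
    · intro b hb _
      unfold WW; rw [ez, qPoch_neg_zero h _ b (by omega)]; ring
    -- left side to core
    set C : ℂ := q ^ (c + (p + n) + 1 + c + 1) * q ^ p with hC
    set w : ℂ := q ^ (l + 2 * p + 1) with hw
    have hL : ∀ d ∈ range (n + 1), gb q (l + 2 * p) p (p + d) *
        WW q (c + (p + n) + 1) c (l + 2 * p + 1) (p + d) =
        WW q (c + (p + n) + 1) c (l + 2 * p + 1) p *
          (cA q n d * (qPoch q C d * qPoch q w d)) := by
      intro d _
      unfold gb WW cA
      rw [if_pos (by omega), ez, qPoch_add, qPoch_add, Nat.add_sub_cancel_left, hw,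
        qPoch_pow h (l + 2 * p) d, ← hC]
      have e1 : q ^ (-((p + n : ℕ) : ℤ)) * q ^ p = q ^ (-(n : ℤ)) := by
        rw [← zpow_natCast, ← zpow_add₀ h0]; congr 1; push_cast; ring
      rw [e1]
      have := QQ_ne h d
      have := QQ_ne h (l + 2 * p)
      field_simp
      ring
    rw [Finset.sum_congr rfl hL, ← Finset.mul_sum, core h]
    -- right side
    have hRz : ∀ d, n < d → d ≤ p + n → WW q (c + (p + n) + 1) (c + d) l p = 0 := by
      intro d hd hd2
      have ez2 : ((1 : ℤ) - ((c + (p + n) + 1 : ℕ) : ℤ) + ((c + d : ℕ) : ℤ))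
          = -((p + n - d : ℕ) : ℤ) := by
        rw [Nat.cast_sub (by omega)]; push_cast; ring
      unfold WW
      rw [ez2, qPoch_neg_zero h (p + n - d) p (by omega)]; ring
    have hR : ∑ d ∈ range (p + n + 1), cf q (c + (p + n) + 1) c d *
          WW q (c + (p + n) + 1) (c + d) l p
        = ∑ d ∈ range (n + 1), cf q (c + (p + n) + 1) c d *
          WW q (c + (p + n) + 1) (c + d) l p := by
      symm
      apply Finset.sum_subset
      · intro x hx; simp only [mem_range] at *; omega
      · intro d hd1 hd2
        simp only [mem_range] at *
        rw [hRz d (by omega) (by omega), mul_zero]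
    rw [hR, Finset.mul_sum, Finset.mul_sum, Finset.mul_sum]
    apply Finset.sum_congr rfl
    intro d hd
    have hd := mem_range.1 hd
    obtain ⟨k, rfl⟩ : ∃ k, n = d + k := ⟨n - d, by omega⟩
    unfold WW cf lam
    have ez2 : ((1 : ℤ) - ((c + (p + (d + k)) + 1 : ℕ) : ℤ) + ((c + d : ℕ) : ℤ))
          = -((p + k : ℕ) : ℤ) := by
        push_cast; ring
    have er2 : c + (p + (d + k)) + 1 - c - 1 = p + (d + k) := by omega
    have er3 : p + (d + k) - d = p + k := by omega
    have er4 : p + k - p = k := by omega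
    have er5 : p + (d + k) - p = d + k := by omega
    have er6 : d + k - d = k := by omega
    rw [ez, ez2, er2, er3, qPoch_neg h _ p (by omega), qPoch_neg h (p + k) p (by omega), er4, er5,
      er6]
    have eC : C = q ^ (c + (p + (d + k)) + 1 + c + p + 1) := by
      rw [hC, ← pow_add]; congr 1; ring
    rw [eC, hw, qPoch_pow h, qPoch_pow h, qPoch_pow h]
    have el : (c + (p + (d + k)) + 1 + (c + d) + 1 : ℕ) =
        (c + (p + (d + k)) + 1 + (c + d)) + 1 := rfl
    rw [qPoch_pow h]
    have a1 := QQ_ne h d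
    have a2 := QQ_ne h k
    have a3 := QQ_ne h (d + k)
    have a4 := QQ_ne h (p + k)
    have a5 := QQ_ne h (c + (p + (d + k)) + 1 + c)
    have a6 := QQ_ne h (c + (p + (d + k)) + 1 + c + p)
    have a7 := QQ_ne h (c + (p + (d + k)) + 1 + (c + d))
    have b1 : c + (p + (d + k)) + 1 + (c + d) + p = c + (p + (d + k)) + 1 + c + p + d := by ring
    have b2 : c + (p + (d + k)) + 1 + c + d = c + (p + (d + k)) + 1 + (c + d) := by ring
    rw [b1, b2]
    generalize QQ q (c + (p + (d + k)) + 1 + c + p + d) = Y1 at *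
    generalize QQ q (c + (p + (d + k)) + 1 + (c + d)) = Y2 at *
    generalize QQ q (c + (p + (d + k)) + 1 + c + p) = Y3 at *
    generalize QQ q (c + (p + (d + k)) + 1 + c) = Y4 at *
    generalize QQ q (p + k) = Y5 at *
    generalize QQ q (p + (d + k)) = Y6 at *
    generalize QQ q (d + k) = Y7 at *
    have key : q ^ ((p + 1) ^ 2) * (q ^ (-(((p + (d + k)) * p : ℕ) : ℤ)) *
        q ^ (p + 1 + c * (l + 2 * p + 1))) * ((q ^ (l + 2 * p + 1)) ^ d *
        (q ^ (c + (p + (d + k)) + 1 + c + p + 1)) ^ k) =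
        q ^ (((c + (p + (d + k)) + 1 : ℕ) : ℤ) ^ 2 - (c : ℤ) ^ 2 - (c : ℤ)) *
        (q ^ ((c + (p + (d + k)) + 1 + c) * d))⁻¹ * (q ^ (-(((p + k) * p : ℕ) : ℤ)) *
        q ^ (p + 1 + (c + d) * l)) := by
      simp only [← pow_mul]
      simp only [← zpow_natCast, ← zpow_neg, ← zpow_add₀ h0]
      congr 1
      push_cast
      ring
    field_simp at key ⊢
    linear_combination (Y6 * Y1) * key

lemma TT_lin (q : ℂ) (m t : ℕ) (s : Finset ℕ) (a : ℕ → ℂ) (f : ℕ → ℕ → ℕ → ℂ) :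
    (TT q m)^[t] (fun l p => ∑ d ∈ s, a d * f d l p) =
      fun l p => ∑ d ∈ s, a d * (TT q m)^[t] (f d) l p := by
  induction t generalizing f with
  | zero => rfl
  | succ t ih =>
    rw [Function.iterate_succ_apply]
    have : TT q m (fun l p => ∑ d ∈ s, a d * f d l p) =
        fun l p => ∑ d ∈ s, a d * TT q m (f d) l p := by
      funext l p
      simp only [TT, Finset.mul_sum]
      rw [Finset.sum_comm]
      apply Finset.sum_congr rfl; intro d _
      apply Finset.sum_congr rfl; intro b _
      ring
    rw [this, ih]
    simp only [Function.iterate_succ_apply]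

noncomputable def zz (q : ℂ) (m s : ℕ) : ℂ :=
  q * (1 - q ^ (2 * s + 1)) * ∏ i ∈ Finset.Ico (s + 1) m, (-q ^ (i + 1))

noncomputable def ZZ (q : ℂ) (m c s : ℕ) : ℂ :=
  if c ≤ s then zz q m s * q ^ ((m - s - 1) * c) * QQ q (s + c) * QQ q (m - c - 1) /
    (QQ q (s - c) * QQ q (m + c)) else 0

lemma ZZ_base {q : ℂ} (h : NR q) (m c : ℕ) (hc : c < m) :
    ∑ s ∈ range m, ZZ q m c s = q := by
  obtain ⟨n, rfl⟩ : ∃ n, m = c + n + 1 := ⟨m - c - 1, by omega⟩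
  have key : ∀ n, ∑ i ∈ range (n + 1), zz q (c + n + 1) (c + i) * q ^ ((n - i) * c) *
      QQ q (c + i + c) / QQ q i = q * QQ q (c + n + 1 + c) / QQ q n := by
    intro n
    induction n with
    | zero =>
      simp only [zz, QQ_zero, zero_add, Finset.sum_range_one, add_zero, Finset.Ico_self,
        Finset.prod_empty, Nat.sub_self, zero_mul, pow_zero]
      have : c + 1 + c = c + c + 1 := by ring
      rw [this, QQ_succ]; ring
    | succ n ih =>
      rw [Finset.sum_range_succ]
      have hs : ∀ i ∈ range (n + 1), zz q (c + (n + 1) + 1) (c + i) * q ^ ((n + 1 - i) * c) *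
          QQ q (c + i + c) / QQ q i = (-q ^ (c + n + 1 + 1) * q ^ c) *
          (zz q (c + n + 1) (c + i) * q ^ ((n - i) * c) * QQ q (c + i + c) / QQ q i) := by
        intro i hi
        have hi := mem_range.1 hi
        have e1 : (n + 1 - i) * c = (n - i) * c + c := by
          rw [show n + 1 - i = (n - i) + 1 by omega]; ring
        have e2 : zz q (c + (n + 1) + 1) (c + i)
            = zz q (c + n + 1) (c + i) * (-q ^ (c + n + 1 + 1)) := by
          unfold zz
          rw [show c + (n + 1) + 1 = (c + n + 1) + 1 by ring,
            Finset.prod_Ico_succ_top (by omega)]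
          ring
        rw [e1, e2, pow_add]; ring
      rw [Finset.sum_congr rfl hs, ← Finset.mul_sum, ih]
      have e3 : zz q (c + (n + 1) + 1) (c + (n + 1)) = q * (1 - q ^ (2 * (c + (n + 1)) + 1)) := by
        simp [zz]
      rw [e3, Nat.sub_self]
      have e4 : c + (n + 1) + c = c + n + 1 + c := by ring
      have e5 : c + (n + 1) + 1 + c = c + n + 1 + c + 1 := by ring
      rw [e4, e5, QQ_succ q (c + n + 1 + c), QQ_succ q n]
      have := QQ_ne h n
      have := h.2 n
      field_simp
      ring
  have := key n
  rw [sum_shift _ c n (by omega)]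
  · have e : ∀ i ∈ range (n + 1), ZZ q (c + n + 1) c (c + i) =
        (zz q (c + n + 1) (c + i) * q ^ ((n - i) * c) * QQ q (c + i + c) / QQ q i) *
        (QQ q n / QQ q (c + n + 1 + c)) := by
      intro i hi
      have hi := mem_range.1 hi
      unfold ZZ
      rw [if_pos (by omega), show c + n + 1 - (c + i) - 1 = n - i by omega,
        show c + n + 1 - c - 1 = n by omega, show c + i - c = i by omega]
      have := QQ_ne h i
      have := QQ_ne h (c + n + 1 + c)
      field_simp
    rw [Finset.sum_congr rfl e, ← Finset.sum_mul, this]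
    have := QQ_ne h n
    have := QQ_ne h (c + n + 1 + c)
    field_simp
  · intro b hb; unfold ZZ; rw [if_neg (by omega)]
  · intro b hb hb2
    omega

lemma vand {q : ℂ} (h : NR q) (n : ℕ) (C : ℂ) :
    ∑ j ∈ range (n + 1), QQ q n / (QQ q j * QQ q (n - j)) * qPoch q C j * C ^ (n - j) = 1 := by
  have := core h n C 1
  rw [Finset.sum_range_succ'] at this
  rw [Finset.sum_eq_zero] at this
  · simp only [cA_zero, qPoch_zero, one_pow, mul_one, zero_add] at this
    exact this.symm
  · intro d _
    rw [qPoch_succ' q 1]; ring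

lemma ZZ_eig {q : ℂ} (h : NR q) (m c s : ℕ) (hc : c < m) (hs : s < m) :
    lam q m c * ∑ d ∈ range (m - c), cf q m c d * ZZ q m (c + d) s = lam q m s * ZZ q m c s := by
  have h0 := h.1
  by_cases hcs : c ≤ s
  swap
  · rw [Finset.sum_eq_zero]
    · unfold ZZ; rw [if_neg (by omega)]; ring
    · intro d _; unfold ZZ; rw [if_neg (by omega)]; ring
  obtain ⟨n, rfl⟩ : ∃ n, s = c + n := ⟨s - c, by omega⟩
  obtain ⟨k, rfl⟩ : ∃ k, m = c + n + k + 1 := ⟨m - (c + n) - 1, by omega⟩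
  have e0 : ∑ d ∈ range (c + n + k + 1 - c), cf q (c + n + k + 1) c d *
        ZZ q (c + n + k + 1) (c + d) (c + n) = ∑ d ∈ range (n + 1), cf q (c + n + k + 1) c d *
        ZZ q (c + n + k + 1) (c + d) (c + n) := by
    symm
    apply Finset.sum_subset
    · intro x hx; simp only [mem_range] at *; omega
    · intro d hd1 hd2
      simp only [mem_range] at *
      unfold ZZ; rw [if_neg (by omega)]; ring
  have hv := vand h n (q ^ (c + n + c + 1))
  have e1 : ∀ d ∈ range (n + 1), cf q (c + n + k + 1) c d * ZZ q (c + n + k + 1) (c + d) (c + n) =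
      (ZZ q (c + n + k + 1) c (c + n) * (q ^ ((c + n + c + 1) * n))⁻¹) *
      (QQ q n / (QQ q d * QQ q (n - d)) * qPoch q (q ^ (c + n + c + 1)) d *
        (q ^ (c + n + c + 1)) ^ (n - d)) := by
    intro d hd
    have hd := mem_range.1 hd
    obtain ⟨r, rfl⟩ : ∃ r, n = d + r := ⟨n - d, by omega⟩
    unfold cf ZZ
    rw [if_pos (by omega), if_pos (by omega)]
    rw [show c + (d + r) + k + 1 - c - 1 = d + r + k by omega,
      show c + (d + r) + k + 1 - (c + d) - 1 = r + k by omega,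
      show d + r + k - d = r + k by omega, show c + (d + r) - (c + d) = r by omega,
      show c + (d + r) - c = d + r by omega, show d + r - d = r by omega,
      show c + (d + r) + k + 1 - (c + (d + r)) - 1 = k by omega]
    rw [qPoch_pow h, qPoch_pow h]
    rw [show c + (d + r) + k + 1 + c + d = c + (d + r) + k + 1 + (c + d) by ring,
      show c + (d + r) + c + d = c + (d + r) + (c + d) by ring]
    have a1 := QQ_ne h d
    have a2 := QQ_ne h r
    have a3 := QQ_ne h (d + r)
    have a4 := QQ_ne h (r + k)
    have a5 := QQ_ne h (c + (d + r) + k + 1 + c)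
    have a6 := QQ_ne h (c + (d + r) + k + 1 + (c + d))
    have a7 := QQ_ne h (c + (d + r) + c)
    have key : (q ^ ((c + (d + r) + k + 1 + c) * d))⁻¹ * q ^ (k * (c + d)) =
        q ^ (k * c) * (q ^ ((c + (d + r) + c + 1) * (d + r)))⁻¹ *
          (q ^ (c + (d + r) + c + 1)) ^ r := by
      simp only [← pow_mul]
      simp only [← zpow_natCast, ← zpow_neg, ← zpow_add₀ h0]
      congr 1
      push_cast
      ring
    generalize QQ q (c + (d + r) + k + 1 + (c + d)) = Y1 at *
    generalize QQ q (c + (d + r) + k + 1 + c) = Y2 at *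
    generalize QQ q (c + (d + r) + (c + d)) = Y3 at *
    generalize QQ q (c + (d + r) + c) = Y4 at *
    generalize QQ q (d + r + k) = Y5 at *
    generalize QQ q (d + r) = Y6 at *
    generalize QQ q (r + k) = Y7 at *
    generalize zz q (c + (d + r) + k + 1) (c + (d + r)) = Y8 at *
    have : ∀ A B : ℂ, A = B → Y8 * Y5 * Y3 / (Y2 * QQ q d * QQ q r) * A
      = Y8 * Y5 * Y3 / (Y2 * QQ q d * QQ q r) * B := by intro A B h; rw [h]
    refine Eq.trans ?_ ((this _ _ key).trans ?_)
    · field_simp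
    · field_simp
  rw [e0, Finset.sum_congr rfl e1, ← Finset.mul_sum, hv]
  have e2 : lam q (c + n + k + 1) c * (q ^ ((c + n + c + 1) * n))⁻¹
      = lam q (c + n + k + 1) (c + n) := by
    unfold lam
    simp only [← zpow_natCast, ← zpow_neg, ← zpow_add₀ h0]
    congr 1
    push_cast
    ring
  rw [← e2]; ring

lemma ev_formula {q : ℂ} (h : NR q) (m t c : ℕ) (hc : c < m) :
    (TT q m)^[t] (WW q m c) 0 0 = ∑ s ∈ range m, lam q m s ^ t * ZZ q m c s := by
  induction t generalizing c with
  | zero =>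
    simp only [pow_zero, one_mul, ZZ_base h m c hc, Function.iterate_zero, id]
    simp [WW, qPoch_zero]
  | succ t ih =>
    have e : TT q m (WW q m c) = fun l p =>
        ∑ d ∈ range (m - c), (lam q m c * cf q m c d) * WW q m (c + d) l p := by
      funext l p
      rw [TT_WW h m c l p hc, Finset.mul_sum]
      apply Finset.sum_congr rfl; intro d _; ring
    rw [Function.iterate_succ_apply, e, TT_lin]
    have e2 : ∀ d ∈ range (m - c), (lam q m c * cf q m c d) * (TT q m)^[t] (WW q m (c + d)) 0 0 =
        ∑ s ∈ range m, lam q m s ^ t * (lam q m c * (cf q m c d * ZZ q m (c + d) s)) := by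
      intro d hd
      rw [ih (c + d) (by have := mem_range.1 hd; omega), Finset.mul_sum]
      apply Finset.sum_congr rfl; intro s _; ring
    simp only []
    rw [Finset.sum_congr rfl e2, Finset.sum_comm]
    apply Finset.sum_congr rfl
    intro s hs
    rw [← Finset.mul_sum, ← Finset.mul_sum, ZZ_eig h m c s hc (mem_range.1 hs)]
    ring

/-- `P(m)` -/
lemma P_formula {q : ℂ} (h : NR q) (m t : ℕ) (hm : 0 < m) :
    (∑ a ∈ range m, (TT q m)^[t] (WW q m 0) 1 a) * (1 - q ^ m) =
      ∑ s ∈ range m, lam q m s ^ (t + 1) * (zz q m s / q) := by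
  have h0 := h.1
  have e1 : (TT q m)^[t+1] (WW q m 0) 0 0 = q * ∑ a ∈ range m, (TT q m)^[t] (WW q m 0) 1 a := by
    rw [Function.iterate_succ_apply']
    unfold TT
    simp only [mul_zero, zero_add, one_pow, pow_one]
    congr 1
    apply Finset.sum_congr rfl
    intro b _
    unfold gb
    rw [if_pos (by omega)]
    simp [QQ_zero, div_self (QQ_ne h b)]
  have e2 := ev_formula h m (t + 1) 0 hm
  rw [e1] at e2
  obtain ⟨k, rfl⟩ : ∃ k, m = k + 1 := ⟨m - 1, by omega⟩
  have e3 : ∀ s ∈ range (k + 1), lam q (k + 1) s ^ (t + 1) * ZZ q (k + 1) 0 s =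
     (q / (1 - q ^ (k + 1))) * (lam q (k + 1) s ^ (t + 1) * (zz q (k + 1) s / q)) := by
    intro s _
    unfold ZZ
    rw [if_pos (by omega)]
    simp only [mul_zero, add_zero, Nat.sub_zero, Nat.add_sub_cancel, pow_zero, QQ_succ]
    have := QQ_ne h s
    have := QQ_ne h k
    have := h.2 k
    field_simp
  rw [Finset.sum_congr rfl e3, ← Finset.mul_sum] at e2
  have := h.2 k
  field_simp at e2
  simpa only [mul_div_assoc] using e2

noncomputable def pr (q : ℂ) : (t : ℕ) → ℕ → (Fin (t + 1) → ℕ) → ℂ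
  | 0, _, _ => 1
  | t + 1, l, p => q ^ ((p 0 + 1) ^ 2) * gb q (l + 2 * p 0) (p 0) (p 1) *
      pr q t (l + 2 * p 0 + 1) (Fin.tail p)

lemma qBinom_gb {q : ℂ} (h : NR q) (a b : ℕ) :
    qBinom q ((a : ℤ) + b) b = QQ q (a + b) / (QQ q a * QQ q b) := by
  unfold qBinom
  rw [if_pos (by omega)]
  have e : ∀ j ∈ range ((b : ℤ).toNat), (1 - q ^ ((a : ℤ) + b - b + (j : ℤ) + 1)) /
      (1 - q ^ ((j : ℤ) + 1)) = (1 - q ^ (a + 1) * q ^ j) / (1 - q ^ (j + 1)) := by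
    intro j _
    congr 2
    · rw [← pow_add, ← zpow_natCast]; congr 1; push_cast; ring
  rw [Finset.prod_congr rfl e, Finset.prod_div_distrib, Int.toNat_natCast]
  have := qPoch_pow h a b
  unfold qPoch at this
  rw [this]
  unfold QQ
  rw [div_div]

lemma qBinom_gb' {q : ℂ} (h : NR q) (a p b : ℕ) :
    qBinom q ((a : ℤ) + ((b : ℤ) - p)) ((b : ℤ) - p) = gb q a p b := by
  unfold gb
  split_ifs with hb
  · obtain ⟨d, rfl⟩ : ∃ d, b = p + d := ⟨b - p, by omega⟩
    have : ((p + d : ℕ) : ℤ) - p = d := by push_cast; ring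
    rw [this, qBinom_gb h, Nat.add_sub_cancel_left]
  · unfold qBinom; rw [if_neg (by omega)]

lemma pr_eq (q : ℂ) (t l : ℕ) (p : Fin (t + 1) → ℕ) :
    pr q t l p = ∏ i : Fin t, (q ^ ((p i.castSucc + 1) ^ 2) *
      gb q (l + (i : ℕ) + 2 * (∑ j ∈ Finset.univ.filter (fun j : Fin (t+1) => (j : ℕ) < (i : ℕ)), p j)
        + 2 * p i.castSucc) (p i.castSucc) (p i.succ)) := by
  induction t generalizing l with
  | zero => simp [pr]
  | succ t ih =>
    rw [pr, ih, Fin.prod_univ_succ]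
    congr 1
    · simp
    · apply Finset.prod_congr rfl
      intro i _
      have e : ∑ j ∈ Finset.univ.filter (fun j : Fin (t+1+1) => (j : ℕ) < (i.succ : ℕ)), p j =
         p 0 + ∑ j ∈ Finset.univ.filter (fun j : Fin (t+1) => (j : ℕ) < (i : ℕ)), Fin.tail p j := by
        rw [Finset.sum_filter, Finset.sum_filter, Fin.sum_univ_succ]
        simp [Fin.tail]
      rw [e]
      simp only [Fin.tail, Fin.castSucc_succ, Fin.val_succ]
      congr 2
      ring

lemma UtProd_eq {q : ℂ} (h : NR q) (t : ℕ) (p : Fin (t + 1) → ℕ) :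
    UtProd q t (fun i => p i + 1) = pr q t 1 p := by
  rw [pr_eq q]
  unfold UtProd
  apply Finset.prod_congr rfl
  intro i _
  congr 1
  rw [← qBinom_gb' h]
  have hc : (Finset.univ.filter (fun j : Fin (t+1) => (j : ℕ) < (i : ℕ))).card = (i : ℕ) := by
    rw [Fin.card_filter_val_lt]; have := i.2; omega
  congr 1
  · push_cast
    rw [Finset.sum_add_distrib]
    simp only [Finset.sum_const, hc, nsmul_eq_mul]
    ring
  · push_cast; ring

lemma pr_zero (q : ℂ) (t l : ℕ) (p : Fin (t + 1) → ℕ)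
    (hp : ¬ ∀ i : Fin t, p i.castSucc ≤ p i.succ) : pr q t l p = 0 := by
  rw [pr_eq q]
  push Not at hp
  obtain ⟨i, hi⟩ := hp
  apply Finset.prod_eq_zero (Finset.mem_univ i)
  unfold gb
  rw [if_neg (by omega), mul_zero]

lemma sum_pi_succ (t m : ℕ) (F : (Fin (t + 2) → ℕ) → ℂ) :
    ∑ p ∈ Fintype.piFinset (fun _ : Fin (t + 2) => range m), F p =
    ∑ a ∈ range m, ∑ p ∈ Fintype.piFinset (fun _ : Fin (t + 1) => range m),
      F (Fin.cons a p : Fin (t + 2) → ℕ) := by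
  rw [← Finset.sum_product']
  symm
  apply Finset.sum_nbij' (fun x => (Fin.cons x.1 x.2 : Fin (t + 2) → ℕ))
    (fun p => (p 0, Fin.tail p))
  · intro x hx
    simp only [Finset.mem_product, Fintype.mem_piFinset] at hx ⊢
    intro i
    refine Fin.cases ?_ ?_ i
    · simpa using hx.1
    · intro j; simpa using hx.2 j
  · intro p hp
    simp only [Finset.mem_product, Fintype.mem_piFinset] at hp ⊢
    exact ⟨hp 0, fun j => hp _⟩
  · intro x _; simp
  · intro p _; simp
  · intro x _; rfl

lemma tuple_fin (q : ℂ) (m t l : ℕ) (h : ℕ → ℂ) (g : ℕ → ℂ) :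
    ∑ p ∈ Fintype.piFinset (fun _ : Fin (t + 1) => range m),
      h (p 0) * (pr q t l p * g (p (Fin.last t))) =
    ∑ a ∈ range m, h a * (TT q m)^[t] (fun _ => g) l a := by
  induction t generalizing l h with
  | zero =>
    apply Finset.sum_nbij' (fun p => p 0) (fun a => fun _ => a)
    · intro p hp; exact (Fintype.mem_piFinset.1 hp) 0
    · intro a ha; exact Fintype.mem_piFinset.2 fun _ => ha
    · intro p _; funext i; rw [Fin.fin_one_eq_zero i]
    · intro a _; rfl
    · intro p _; simp [pr]
  | succ t ih =>
    rw [sum_pi_succ]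
    apply Finset.sum_congr rfl
    intro a _
    rw [Function.iterate_succ_apply', TT, ← ih, Finset.mul_sum, Finset.mul_sum]
    apply Finset.sum_congr rfl
    intro p _
    have e1 : (Fin.cons a p : Fin (t + 2) → ℕ) 1 = p 0 := rfl
    have e2 : (Fin.cons a p : Fin (t + 2) → ℕ) (Fin.last (t + 1)) = p (Fin.last t) := rfl
    rw [pr, e1, e2, Fin.cons_zero, Fin.tail_cons]
    ring


lemma mono_le_last {t : ℕ} {p : Fin (t + 1) → ℕ} (hp : ∀ i : Fin t, p i.castSucc ≤ p i.succ)
    (i : Fin (t + 1)) : p i ≤ p (Fin.last t) :=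
  (Fin.monotone_iff_le_succ.2 hp) (Fin.le_last i)

noncomputable def DD (q : ℂ) (t N : ℕ) : ℂ :=
  ∑' p : Fin (t + 1) → ℕ, if p (Fin.last t) = N then pr q t 1 p else 0

lemma pr_supp (q : ℂ) (t N m : ℕ) (hN : N < m) (p : Fin (t + 1) → ℕ)
    (hp : p ∉ Fintype.piFinset (fun _ : Fin (t + 1) => range m)) :
    (if p (Fin.last t) = N then pr q t 1 p else 0) = 0 := by
  split_ifs with h1
  · apply pr_zero
    intro h2
    apply hp
    rw [Fintype.mem_piFinset]
    intro i
    have := mono_le_last h2 i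
    rw [mem_range]; omega
  · rfl

lemma DD_hasSum (q : ℂ) (t N : ℕ) :
    HasSum (fun p : Fin (t + 1) → ℕ => if p (Fin.last t) = N then pr q t 1 p else 0)
      (DD q t N) := by
  have : HasSum (fun p : Fin (t + 1) → ℕ => if p (Fin.last t) = N then pr q t 1 p else 0) _ :=
    hasSum_sum_of_ne_finset_zero (pr_supp q t N (N + 1) (by omega))
  exact this.summable.hasSum

lemma DD_fin (q : ℂ) (t N m : ℕ) (hN : N < m) :
    DD q t N = ∑ p ∈ Fintype.piFinset (fun _ : Fin (t + 1) => range m),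
      if p (Fin.last t) = N then pr q t 1 p else 0 :=
  tsum_eq_sum (fun p hp => pr_supp q t N m hN p hp)

lemma P_eq (q : ℂ) (t m : ℕ) :
    ∑ N ∈ range m, WW q m 0 0 N * DD q t N = ∑ a ∈ range m, (TT q m)^[t] (WW q m 0) 1 a := by
  have e : WW q m 0 = fun _ => WW q m 0 0 := by
    funext l p; simp [WW]
  have h1 := tuple_fin q m t 1 (fun _ => 1) (WW q m 0 0)
  rw [← e] at h1
  simp only [one_mul] at h1
  rw [← h1]
  have h2 : ∀ N ∈ range m, WW q m 0 0 N * DD q t N =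
      ∑ p ∈ Fintype.piFinset (fun _ : Fin (t + 1) => range m),
        if p (Fin.last t) = N then pr q t 1 p * WW q m 0 0 N else 0 := by
    intro N hN
    rw [DD_fin q t N m (mem_range.1 hN), Finset.mul_sum]
    apply Finset.sum_congr rfl; intro p _
    split_ifs
    · ring
    · ring
  rw [Finset.sum_congr rfl h2, Finset.sum_comm]
  apply Finset.sum_congr rfl
  intro p hp
  rw [Finset.sum_ite_eq, if_pos (Fintype.mem_piFinset.1 hp _)]

lemma ch2 (n : ℕ) : 2 * ((n.choose 2 : ℕ) : ℤ) = n ^ 2 - n := by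
  induction n with
  | zero => simp
  | succ n ih =>
    rw [Nat.choose_succ_succ' n 1]; simp only [Nat.choose_one_right]; push_cast
    linear_combination ih

lemma orth_aux {q : ℂ} (h : NR q) (K n I : ℕ) (hn : 0 < n) (hI : I ≤ n) :
    ∑ i ∈ range (I + 1), (-1 : ℂ) ^ i * q ^ (i.choose 2) * (1 - q ^ (2 * (K + 1 + i))) *
      QQ q (2 * K + 1 + i) / (QQ q i * QQ q (n - i) * QQ q (n + 2 * K + 2 + i)) =
    (-1 : ℂ) ^ I * q ^ ((I + 1).choose 2) * QQ q (2 * K + 2 + I) * (1 - q ^ (n - I)) /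
      (QQ q I * QQ q (n - I) * QQ q (n + 2 * K + 2 + I) * (1 - q ^ n)) := by
  obtain ⟨n', rfl⟩ : ∃ n', n = n' + 1 := ⟨n - 1, by omega⟩
  have hh := h.2 n'
  induction I with
  | zero =>
    have := QQ_ne h (n' + 1)
    have := QQ_ne h (n' + 1 + 2 * K + 2)
    simp only [zero_add, Finset.sum_range_one, add_zero, Nat.sub_zero, QQ_zero]
    rw [show 2 * K + 2 = 2 * K + 1 + 1 by ring, QQ_succ q (2 * K + 1),
      show 2 * (K + 1) = 2 * K + 1 + 1 by ring]
    simp only [Nat.choose_eq_zero_of_lt (show 0 < 2 by omega),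
      Nat.choose_eq_zero_of_lt (show 1 < 2 by omega)]
    field_simp
  | succ I ih =>
    rw [Finset.sum_range_succ, ih (by omega)]
    obtain ⟨k, rfl⟩ : ∃ k, n' = I + k := ⟨n' - I, by omega⟩
    rw [show I + k + 1 - I = k + 1 by omega, show I + k + 1 - (I + 1) = k by omega,
      Nat.choose_succ_succ' (I + 1) 1, Nat.choose_one_right]
    rw [show I + k + 1 + 2 * K + 2 + (I + 1) = (I + k + 1 + 2 * K + 2 + I) + 1 by ring,
      show 2 * K + 1 + (I + 1) = 2 * K + 2 + I by ring,
      show 2 * K + 2 + (I + 1) = (2 * K + 2 + I) + 1 by ring]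
    rw [QQ_succ q k, QQ_succ q I, QQ_succ q (I + k + 1 + 2 * K + 2 + I),
      QQ_succ q (2 * K + 2 + I)]
    have a1 := QQ_ne h k
    have a2 := QQ_ne h I
    have a3 := QQ_ne h (I + k + 1 + 2 * K + 2 + I)
    have b1 := h.2 k
    have b2 := h.2 I
    have b3 := h.2 (I + k + 1 + 2 * K + 2 + I)
    field_simp
    ring

noncomputable def cc (q : ℂ) (m : ℕ) : ℂ :=
  (-1) ^ (m + 1) * q ^ (m.choose 2) * (q ^ m)⁻¹ * (1 - q ^ (2 * m)) * (1 - q ^ m)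

lemma cc_WW {q : ℂ} (h : NR q) (K i : ℕ) :
    cc q (K + 1 + i) * WW q (K + 1 + i) 0 0 K =
      (-1 : ℂ) ^ i * q ^ (i.choose 2) * (1 - q ^ (2 * (K + 1 + i))) *
      QQ q (2 * K + 1 + i) / QQ q i := by
  have h0 := h.1
  unfold cc WW
  have e1 : (1 : ℤ) - ((K + 1 + i : ℕ) : ℤ) + ((0 : ℕ) : ℤ) = -((K + i : ℕ) : ℤ) := by
    push_cast; ring
  rw [e1, qPoch_neg h (K + i) K (by omega), add_zero, qPoch_pow h,
    show K + i - K = i by omega, show K + 1 + i + K = 2 * K + 1 + i by ring,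
    show QQ q (K + 1 + i) = QQ q (K + i) * (1 - q ^ (K + 1 + i)) by
      rw [show K + 1 + i = K + i + 1 by ring, QQ_succ]]
  have a1 := QQ_ne h i
  have a2 := QQ_ne h (K + i)
  have a3 : 1 - q ^ (K + 1 + i) ≠ 0 := by
    rw [show K + 1 + i = K + i + 1 by ring]; exact h.2 _
  have key : q ^ ((K + 1 + i).choose 2) * (q ^ (K + 1 + i))⁻¹ * (q ^ (K.choose 2) *
      q ^ (-(((K + i) * K : ℕ) : ℤ))) * q ^ (K + 1 + 0 * 0) = q ^ (i.choose 2) := by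
    simp only [← zpow_natCast, ← zpow_neg, ← zpow_add₀ h0]
    congr 1
    apply mul_left_cancel₀ (two_ne_zero (α := ℤ))
    have c1 := ch2 (K + 1 + i)
    have c2 := ch2 K
    have c3 := ch2 i
    push_cast at c1 c2 c3 ⊢
    linear_combination c1 + c2 - c3
  have ks : (-1 : ℂ) ^ (K + 1 + i + 1) * (-1) ^ K = (-1) ^ i := by
    rw [← pow_add, show K + 1 + i + 1 + K = i + 2 * (K + 1) by ring, pow_add, pow_mul]; simp
  rw [← key, ← ks]
  field_simp

lemma orth {q : ℂ} (h : NR q) (K n : ℕ) :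
    ∑ i ∈ range (n + 1), cc q (K + 1 + i) * WW q (K + 1 + i) 0 0 K /
      (QQ q (n - i) * QQ q (n + 2 * K + 2 + i)) = if n = 0 then 1 else 0 := by
  have e : ∀ i ∈ range (n + 1), cc q (K + 1 + i) * WW q (K + 1 + i) 0 0 K /
      (QQ q (n - i) * QQ q (n + 2 * K + 2 + i)) =
      (-1 : ℂ) ^ i * q ^ (i.choose 2) * (1 - q ^ (2 * (K + 1 + i))) *
      QQ q (2 * K + 1 + i) / (QQ q i * QQ q (n - i) * QQ q (n + 2 * K + 2 + i)) := by
    intro i _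
    rw [cc_WW h, div_div, mul_assoc (QQ q i)]
  rw [Finset.sum_congr rfl e]
  split_ifs with hn
  · subst hn
    have := QQ_ne h (2 * K + 1)
    have := h.2 (2 * K + 1)
    simp only [zero_add, Finset.sum_range_one, add_zero, QQ_zero, QQ_succ q (2 * K + 1),
      show 2 * (K + 1) = 2 * K + 1 + 1 by ring, show 2 * K + 2 = 2 * K + 1 + 1 by ring,
      Nat.choose_eq_zero_of_lt (show 0 < 2 by omega), Nat.sub_self]
    field_simp
  · rw [orth_aux h K n n (by omega) le_rfl]
    simp

lemma inversion {q : ℂ} (h : NR q) (D : ℕ → ℂ) (N : ℕ) :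
    D N = ∑ M ∈ range (N + 1), cc q (M + 1) * (∑ K ∈ range (M + 1), WW q (M + 1) 0 0 K * D K) /
      (QQ q (N - M) * QQ q (N + M + 2)) := by
  have e : ∀ M ∈ range (N + 1), cc q (M + 1) * (∑ K ∈ range (M + 1), WW q (M + 1) 0 0 K * D K) /
      (QQ q (N - M) * QQ q (N + M + 2)) = ∑ K ∈ range (N + 1), if K ≤ M then
        D K * (cc q (M + 1) * WW q (M + 1) 0 0 K / (QQ q (N - M) * QQ q (N + M + 2))) else 0 := by
    intro M hM
    have hM := mem_range.1 hM
    rw [← Finset.sum_filter, Finset.mul_sum, Finset.sum_div]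
    have : (range (N + 1)).filter (fun K => K ≤ M) = range (M + 1) := by
      ext K; simp only [mem_filter, mem_range]; omega
    rw [this]
    apply Finset.sum_congr rfl; intro K _; ring
  rw [Finset.sum_congr rfl e, Finset.sum_comm]
  have e2 : ∀ K ∈ range (N + 1), (∑ M ∈ range (N + 1), if K ≤ M then
        D K * (cc q (M + 1) * WW q (M + 1) 0 0 K / (QQ q (N - M) * QQ q (N + M + 2))) else 0) =
      if N = K then D K else 0 := by
    intro K hK
    have hK := mem_range.1 hK
    rw [sum_shift (N + 1) K (N - K) (by omega)]
    · have o := orth h K (N - K)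
      have e3 : ∀ i ∈ range (N - K + 1), (if K ≤ K + i then
          D K * (cc q (K + i + 1) * WW q (K + i + 1) 0 0 K /
            (QQ q (N - (K + i)) * QQ q (N + (K + i) + 2))) else 0) =
          D K * (cc q (K + 1 + i) * WW q (K + 1 + i) 0 0 K /
          (QQ q (N - K - i) * QQ q (N - K + 2 * K + 2 + i))) := by
        intro i _
        rw [if_pos (by omega), show K + i + 1 = K + 1 + i by ring,
          show N - (K + i) = N - K - i by omega,
          show N - K + 2 * K + 2 + i = N + (K + i) + 2 by omega]
      rw [Finset.sum_congr rfl e3, ← Finset.mul_sum, o]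
      by_cases hh : N = K
      · rw [if_pos (by omega), if_pos hh, mul_one]
      · rw [if_neg (by omega), if_neg hh, mul_zero]
    · intro b hb; rw [if_neg (by omega)]
    · intro b hb hb2; omega
  rw [Finset.sum_congr rfl e2, Finset.sum_ite_eq, if_pos (by simp)]

noncomputable def gam (q : ℂ) (t m : ℕ) : ℂ :=
  (-1) ^ (m + 1) * q ^ (m.choose 2) * ∑ s ∈ range m, lam q m s ^ (t + 1) * (zz q m s / q)

lemma DD_eq {q : ℂ} (h : NR q) (t N : ℕ) :
    DD q t N = ∑ M ∈ range (N + 1), gam q t (M + 1) * (q ^ (M + 1))⁻¹ * (1 - q ^ (2 * (M + 1))) /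
      (QQ q (N - M) * QQ q (N + M + 2)) := by
  conv_lhs => rw [inversion h (DD q t) N]
  apply Finset.sum_congr rfl
  intro M _
  rw [P_eq, gam, ← P_formula h _ t (by omega), cc]
  ring

lemma NR_of {q : ℂ} (hq0 : 0 < ‖q‖) (hq1 : ‖q‖ < 1) : NR q := by
  refine ⟨norm_pos_iff.1 hq0, fun n hn => ?_⟩
  have h1 : ‖q ^ (n + 1)‖ = 1 := by
    rw [← sub_eq_zero.1 hn]; simp
  rw [norm_pow] at h1
  have := pow_lt_one₀ hq0.le hq1 (n := n + 1) (by omega)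
  linarith

lemma summ_geo {q : ℂ} (hq1 : ‖q‖ < 1) (a : ℂ) : Summable (fun j : ℕ => ‖-(a * q ^ j)‖) := by
  simp only [norm_neg, norm_mul, norm_pow]
  exact (summable_geometric_of_lt_one (norm_nonneg _) hq1).mul_left _

lemma qPoch_tendsto {q : ℂ} (hq1 : ‖q‖ < 1) (a : ℂ) :
    Filter.Tendsto (qPoch q a) Filter.atTop (nhds (qPochInf q a)) := by
  have := (multipliable_one_add_of_summable (summ_geo hq1 a)).tendsto_prod_tprod_nat
  simp only [← sub_eq_add_neg] at this
  exact this

lemma qPoch_ne {q a : ℂ} (ha : ∀ n, 1 - a * q ^ n ≠ 0) (n : ℕ) : qPoch q a n ≠ 0 :=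
  Finset.prod_ne_zero_iff.mpr fun j _ => ha j

lemma qPochInf_ne {q a : ℂ} (hq1 : ‖q‖ < 1) (ha : ∀ n, 1 - a * q ^ n ≠ 0) :
    qPochInf q a ≠ 0 := by
  have := tprod_one_add_ne_zero_of_summable (f := fun j : ℕ => -(a * q ^ j))
    (fun i => by rw [← sub_eq_add_neg]; exact ha i) (summ_geo hq1 a)
  simp only [← sub_eq_add_neg] at this
  exact this

lemma bdd_of_tendsto {f : ℕ → ℂ} {l : ℂ} (h : Filter.Tendsto f Filter.atTop (nhds l)) :
    ∃ C : ℝ, 1 ≤ C ∧ ∀ n, ‖f n‖ ≤ C := by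
  obtain ⟨C, hC⟩ := (Metric.isBounded_range_of_tendsto f h).exists_norm_le
  exact ⟨max 1 C, le_max_left _ _, fun n => (hC _ ⟨n, rfl⟩).trans (le_max_right _ _)⟩

lemma QQ_tendsto {q : ℂ} (hq1 : ‖q‖ < 1) :
    Filter.Tendsto (QQ q) Filter.atTop (nhds (qPochInf q q)) := by
  have := qPoch_tendsto hq1 q
  refine this.congr fun n => qPoch_q q n

lemma Qinf_ne {q : ℂ} (h : NR q) (hq1 : ‖q‖ < 1) : qPochInf q q ≠ 0 := by
  apply qPochInf_ne hq1
  intro n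
  rw [← pow_succ']
  exact h.2 n

lemma QQ_bdd {q : ℂ} (h : NR q) (hq1 : ‖q‖ < 1) :
    ∃ C : ℝ, 1 ≤ C ∧ ∀ n, ‖QQ q n‖ ≤ C ∧ ‖(QQ q n)⁻¹‖ ≤ C := by
  obtain ⟨C1, h1, h2⟩ := bdd_of_tendsto (QQ_tendsto hq1)
  obtain ⟨C2, h3, h4⟩ := bdd_of_tendsto ((QQ_tendsto hq1).inv₀ (Qinf_ne h hq1))
  exact ⟨max C1 C2, h1.trans (le_max_left _ _), fun n =>
    ⟨(h2 n).trans (le_max_left _ _), (h4 n).trans (le_max_right _ _)⟩⟩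

lemma gb_bdd {q : ℂ} (h : NR q) (hq1 : ‖q‖ < 1) :
    ∃ C : ℝ, 1 ≤ C ∧ ∀ a p b, ‖gb q a p b‖ ≤ C := by
  obtain ⟨C, h1, h2⟩ := QQ_bdd h hq1
  refine ⟨C * (C * C), by nlinarith [mul_self_nonneg (C - 1)], fun a p b => ?_⟩
  unfold gb
  split_ifs
  · rw [div_eq_mul_inv, mul_inv, norm_mul, norm_mul]
    gcongr
    · exact (h2 _).1
    · exact (h2 _).2
    · exact (h2 _).2
  · simp; positivity

lemma pr_bdd {q : ℂ} (h : NR q) (hq1 : ‖q‖ < 1) (t : ℕ) :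
    ∃ C : ℝ, 1 ≤ C ∧ ∀ l p, ‖pr q t l p‖ ≤ C * ∏ i : Fin t, ‖q‖ ^ (p i.castSucc) := by
  obtain ⟨C, h1, h2⟩ := gb_bdd h hq1
  refine ⟨C ^ t, one_le_pow₀ h1, fun l p => ?_⟩
  rw [pr_eq q, norm_prod, show C ^ t = ∏ i : Fin t, C by simp, ← Finset.prod_mul_distrib]
  apply Finset.prod_le_prod
  · intros; positivity
  · intro i _
    rw [norm_mul, norm_pow, mul_comm C]
    gcongr ?_ * ?_
    · apply pow_le_pow_of_le_one (norm_nonneg _) hq1.le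
      nlinarith
    · exact h2 _ _ _

lemma summ_pi (r : ℝ) (h0 : 0 ≤ r) (h1 : r < 1) (t : ℕ) :
    Summable (fun p : Fin t → ℕ => ∏ i, r ^ (p i)) := by
  induction t with
  | zero => exact (hasSum_fintype _).summable
  | succ t ih =>
    rw [← (Fin.consEquiv (fun _ : Fin (t + 1) => ℕ)).summable_iff]
    have := (summable_geometric_of_lt_one h0 h1).mul_of_nonneg ih
      (fun n => by positivity) (fun p => by positivity)
    refine this.congr fun p => ?_
    simp [Fin.consEquiv, Fin.prod_univ_succ]

noncomputable def wt (q x : ℂ) (N : ℕ) : ℂ :=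
  qPoch q (x * q) N * qPoch q (q / x) N * q ^ (N + 1)

lemma wt_bdd {q : ℂ} (hq1 : ‖q‖ < 1) (x : ℂ) :
    ∃ C : ℝ, 1 ≤ C ∧ ∀ N, ‖wt q x N‖ ≤ C * ‖q‖ ^ (N + 1) := by
  obtain ⟨C1, h1, h2⟩ := bdd_of_tendsto (qPoch_tendsto hq1 (x * q))
  obtain ⟨C2, h3, h4⟩ := bdd_of_tendsto (qPoch_tendsto hq1 (q / x))
  refine ⟨C1 * C2, by nlinarith, fun N => ?_⟩
  rw [wt, norm_mul, norm_mul, norm_pow]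
  gcongr
  · exact h2 N
  · exact h4 N

lemma main_summ {q : ℂ} (h : NR q) (hq1 : ‖q‖ < 1) (x : ℂ) (t : ℕ) :
    Summable (fun p : Fin (t + 1) → ℕ => ‖wt q x (p (Fin.last t)) * pr q t 1 p‖) := by
  obtain ⟨C1, h1, h2⟩ := wt_bdd hq1 x
  obtain ⟨C2, h3, h4⟩ := pr_bdd h hq1 t
  have hs := (summ_pi ‖q‖ (norm_nonneg _) hq1 (t + 1)).mul_left (C1 * C2)
  refine Summable.of_nonneg_of_le (fun _ => norm_nonneg _) (fun p => ?_) hs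
  rw [norm_mul, Fin.prod_univ_castSucc]
  calc _ ≤ (C1 * ‖q‖ ^ (p (Fin.last t))) * (C2 * ∏ i : Fin t, ‖q‖ ^ (p i.castSucc)) := by
        gcongr
        · refine (h2 _).trans ?_
          gcongr ?_ * ?_
          apply pow_le_pow_of_le_one (norm_nonneg _) hq1.le
          omega
        · exact h4 _ _
    _ = _ := by ring

def shiftK (t : ℕ) (k : {k : Fin (t+1) → ℕ //
    (∀ i : Fin t, k i.castSucc ≤ k i.succ) ∧ 1 ≤ k 0}) : Fin (t + 1) → ℕ := fun i => k.1 i - 1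

lemma K_pos {t : ℕ} {k : Fin (t+1) → ℕ}
    (hk : (∀ i : Fin t, k i.castSucc ≤ k i.succ) ∧ 1 ≤ k 0) (i : Fin (t + 1)) : 1 ≤ k i :=
  hk.2.trans ((Fin.monotone_iff_le_succ.2 hk.1) (Fin.zero_le i))

lemma shiftK_inj (t : ℕ) : Function.Injective (shiftK t) := by
  intro a b hab
  apply Subtype.ext
  funext i
  have := congrFun hab i
  simp only [shiftK] at this
  have h1 := K_pos a.2 i
  have h2 := K_pos b.2 i
  omega

lemma UtTerm_eq {q : ℂ} (h : NR q) (x : ℂ) (t : ℕ) (k : {k : Fin (t+1) → ℕ //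
    (∀ i : Fin t, k i.castSucc ≤ k i.succ) ∧ 1 ≤ k 0}) :
    UtTerm q x t k.1 = wt q x (shiftK t k (Fin.last t)) * pr q t 1 (shiftK t k) := by
  rw [← UtProd_eq h, UtTerm, wt]
  have : (fun i => shiftK t k i + 1) = k.1 := by
    funext i
    have h1 := K_pos k.2 i
    simp only [shiftK]; omega
  rw [this]
  have h2 : shiftK t k (Fin.last t) + 1 = k.1 (Fin.last t) := congrFun this _
  rw [← h2]
  simp

lemma K_summ {q : ℂ} (h : NR q) (hq1 : ‖q‖ < 1) (x : ℂ) (t : ℕ) :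
    Summable (fun k : {k : Fin (t+1) → ℕ //
        (∀ i : Fin t, k i.castSucc ≤ k i.succ) ∧ 1 ≤ k 0} => ‖UtTerm q x t k.1‖) := by
  have := (main_summ h hq1 x t).comp_injective (shiftK_inj t)
  refine this.congr fun k => ?_
  rw [UtTerm_eq h]; rfl

lemma K_tsum {q : ℂ} (h : NR q) (x : ℂ) (t : ℕ) :
    ∑' k : {k : Fin (t+1) → ℕ //
        (∀ i : Fin t, k i.castSucc ≤ k i.succ) ∧ 1 ≤ k 0}, UtTerm q x t k.1 =
    ∑' p : Fin (t + 1) → ℕ, wt q x (p (Fin.last t)) * pr q t 1 p := by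
  rw [← (shiftK_inj t).tsum_eq (f := fun p : Fin (t + 1) → ℕ =>
    wt q x (p (Fin.last t)) * pr q t 1 p)]
  · exact tsum_congr fun k => UtTerm_eq h x t k
  · intro p hp
    rw [Function.mem_support] at hp
    have hm : ∀ i : Fin t, p i.castSucc ≤ p i.succ := by
      by_contra hc
      exact hp (by rw [pr_zero q t 1 p hc, mul_zero])
    exact ⟨⟨fun i => p i + 1, fun i => by simpa using hm i, by simp⟩, by funext i; simp [shiftK]⟩

lemma main_fiber {q : ℂ} (h : NR q) (hq1 : ‖q‖ < 1) (x : ℂ) (t : ℕ) :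
    ∑' p : Fin (t + 1) → ℕ, wt q x (p (Fin.last t)) * pr q t 1 p =
    ∑' N : ℕ, wt q x N * DD q t N := by
  have hs := (main_summ h hq1 x t).of_norm
  let e := Equiv.sigmaFiberEquiv (fun p : Fin (t + 1) → ℕ => p (Fin.last t))
  have hs2 := e.summable_iff.2 hs
  rw [← e.tsum_eq]
  refine (Summable.tsum_sigma hs2).trans ?_
  refine tsum_congr fun N => ?_
  rw [DD, ← tsum_mul_left]
  rw [← tsum_subtype_eq_of_support_subset (s := {p : Fin (t + 1) → ℕ | p (Fin.last t) = N})]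
  · refine tsum_congr fun p => ?_
    have : p.1 (Fin.last t) = N := p.2
    simp [e, Equiv.sigmaFiberEquiv, this]
  · intro p hp
    rw [Function.mem_support] at hp
    by_contra hc
    have hc' : ¬ p (Fin.last t) = N := hc
    exact hp (by rw [if_neg hc', mul_zero])

lemma qgauss_fin {q : ℂ} (h : NR q) {x : ℂ} (hx : x ≠ 0) (M : ℕ)
    (h1 : 1 - x * q ^ (M + 1) ≠ 0) (h2 : 1 - q ^ (M + 1) / x ≠ 0) (L : ℕ) :
    ∑ n ∈ range (L + 1), wt q x (M + n) / (QQ q n * QQ q (n + (2 * M + 2))) =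
      q ^ (M + 1) * qPoch q (x * q) (M + 1 + L) * qPoch q (q / x) (M + 1 + L) /
        ((1 - x * q ^ (M + 1)) * (1 - q ^ (M + 1) / x) * (QQ q L * QQ q (L + (2 * M + 2)))) := by
  induction L with
  | zero =>
    have := QQ_ne h (2 * M + 2)
    have e1 : qPoch q (x * q) (M + 1) = qPoch q (x * q) M * (1 - x * q ^ (M + 1)) := by
      rw [qPoch_succ]; ring
    have e2 : qPoch q (q / x) (M + 1) = qPoch q (q / x) M * (1 - q ^ (M + 1) / x) := by
      rw [qPoch_succ]; ring
    simp only [zero_add, Finset.sum_range_one, add_zero, QQ_zero, wt, e1, e2, one_mul]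
    generalize 1 - x * q ^ (M + 1) = A at *
    generalize 1 - q ^ (M + 1) / x = B at *
    field_simp
  | succ L ih =>
    rw [Finset.sum_range_succ, ih, wt]
    have e1 : qPoch q (x * q) (M + 1 + (L + 1)) =
        qPoch q (x * q) (M + 1 + L) * (1 - x * (q ^ (M + 1) * q ^ (L + 1))) := by
      rw [← add_assoc (M + 1), qPoch_succ]; ring
    have e2 : qPoch q (q / x) (M + 1 + (L + 1)) =
        qPoch q (q / x) (M + 1 + L) * (1 - q ^ (M + 1) * q ^ (L + 1) / x) := by
      rw [← add_assoc (M + 1), qPoch_succ]; ring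
    have e3 : QQ q (L + 1) = QQ q L * (1 - q ^ (L + 1)) := QQ_succ q L
    have e4 : QQ q (L + 1 + (2 * M + 2)) =
        QQ q (L + (2 * M + 2)) * (1 - q ^ (L + 1) * (q ^ (M + 1)) ^ 2) := by
      rw [show L + 1 + (2 * M + 2) = L + (2 * M + 2) + 1 by ring, QQ_succ]; ring
    have n1 := QQ_ne h L
    have n2 := QQ_ne h (L + (2 * M + 2))
    have n3 : 1 - q ^ (L + 1) ≠ 0 := h.2 L
    have n4 : 1 - q ^ (L + 1) * (q ^ (M + 1)) ^ 2 ≠ 0 := by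
      have := h.2 (L + (2 * M + 2))
      convert this using 2; ring
    rw [e1, e2, e3, e4, show M + (L + 1) = M + 1 + L by ring,
      show q ^ (M + 1 + L + 1) = q ^ (M + 1) * q ^ (L + 1) by ring]
    generalize qPoch q (x * q) (M + 1 + L) = X at *
    generalize qPoch q (q / x) (M + 1 + L) = Y at *
    generalize QQ q L = Q1 at *
    generalize QQ q (L + (2 * M + 2)) = Q2 at *
    generalize q ^ (L + 1) = z at *
    generalize q ^ (M + 1) = y at *
    obtain ⟨B, hB⟩ : ∃ B, B = 1 - y / x := ⟨_, rfl⟩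
    obtain ⟨A, hA⟩ : ∃ A, A = 1 - x * y := ⟨_, rfl⟩
    obtain ⟨D, hD⟩ : ∃ D, D = 1 - z := ⟨_, rfl⟩
    obtain ⟨E, hE⟩ : ∃ E, E = 1 - z * y ^ 2 := ⟨_, rfl⟩
    have key : z * A * B + D * E =
        (1 - x * (y * z)) * (1 - y * z / x) := by
      rw [hA, hB, hD, hE]; field_simp; ring
    rw [← hA] at h1 ⊢
    rw [← hB] at h2 ⊢
    rw [← hD] at n3 ⊢
    rw [← hE] at n4 ⊢
    rw [div_add_div _ _ (by positivity) (by positivity), div_eq_div_iff (by positivity) (by positivity)]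
    linear_combination X * Y * y * A * B * Q1 ^ 2 * Q2 ^ 2 * D * E * key

lemma qgauss {q : ℂ} (h : NR q) (hq1 : ‖q‖ < 1) {x : ℂ} (hx : x ≠ 0) (M : ℕ)
    (h1 : 1 - x * q ^ (M + 1) ≠ 0) (h2 : 1 - q ^ (M + 1) / x ≠ 0)
    (hs : Summable (fun n => wt q x (M + n) / (QQ q n * QQ q (n + (2 * M + 2))))) :
    ∑' n : ℕ, wt q x (M + n) / (QQ q n * QQ q (n + (2 * M + 2))) =
      q ^ (M + 1) * qPochInf q (x * q) * qPochInf q (q / x) /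
        ((1 - x * q ^ (M + 1)) * (1 - q ^ (M + 1) / x) * (qPochInf q q) ^ 2) := by
  have l1 := (Filter.tendsto_add_atTop_iff_nat 1).2 hs.hasSum.tendsto_sum_nat
  refine tendsto_nhds_unique l1 ?_
  simp only [qgauss_fin h hx M h1 h2]
  have sh : ∀ k : ℕ, Filter.Tendsto (fun L : ℕ => L + k) Filter.atTop Filter.atTop :=
    fun k => Filter.tendsto_add_atTop_nat k
  have a1 : Filter.Tendsto (fun L => qPoch q (x * q) (M + 1 + L)) Filter.atTop
      (nhds (qPochInf q (x * q))) := by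
    have := (qPoch_tendsto hq1 (x * q)).comp (sh (M + 1))
    refine this.congr fun L => ?_
    rw [Function.comp_apply, add_comm]
  have a2 : Filter.Tendsto (fun L => qPoch q (q / x) (M + 1 + L)) Filter.atTop
      (nhds (qPochInf q (q / x))) := by
    have := (qPoch_tendsto hq1 (q / x)).comp (sh (M + 1))
    refine this.congr fun L => ?_
    rw [Function.comp_apply, add_comm]
  have a3 := (QQ_tendsto hq1).comp (sh (2 * M + 2))
  have a4 := QQ_tendsto hq1
  have hn := Qinf_ne h hq1
  rw [sq]
  exact ((a1.const_mul _).mul a2).div ((a4.mul a3).const_mul _)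
    (mul_ne_zero (mul_ne_zero h1 h2) (mul_ne_zero hn hn))

lemma ico_prod (q : ℂ) (s n : ℕ) :
    (∏ i ∈ Finset.Ico (s + 1) (s + 1 + n), (-q ^ (i + 1))) * q ^ ((s + 2).choose 2) =
      (-1) ^ n * q ^ ((s + 1 + n + 1).choose 2) := by
  induction n with
  | zero => simp
  | succ n ih =>
    rw [← add_assoc, Finset.prod_Ico_succ_top (by omega), mul_right_comm, ih,
      Nat.choose_succ_succ' (s + 1 + n + 1) 1, Nat.choose_one_right]
    ring

noncomputable def gt (q : ℂ) (t m s : ℕ) : ℂ :=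
  (-1) ^ s * q ^ (((t : ℤ) + 2) * m ^ 2 - (t + 1) * (s ^ 2 + s) - ((s + 2).choose 2 : ℕ)) *
    (1 - q ^ (2 * s + 1))

lemma gam_eq {q : ℂ} (h : NR q) (t m : ℕ) : gam q t m = ∑ s ∈ range m, gt q t m s := by
  rw [gam, Finset.mul_sum]
  apply Finset.sum_congr rfl
  intro s hs
  rw [mem_range] at hs
  obtain ⟨n, rfl⟩ : ∃ n, m = s + 1 + n := ⟨m - (s + 1), by omega⟩
  have hp := ico_prod q s n
  set m := s + 1 + n with hm
  have h0 := h.1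
  have hp' : (∏ i ∈ Finset.Ico (s + 1) m, (-q ^ (i + 1))) =
      (-1) ^ n * q ^ ((m + 1).choose 2) / q ^ ((s + 2).choose 2) := by
    rw [eq_div_iff (pow_ne_zero _ h0)]; exact hp
  have hc : (m.choose 2 : ℤ) + ((m + 1).choose 2 : ℕ) = m ^ 2 := by
    have a := ch2 m
    have b := ch2 (m + 1)
    push_cast at a b ⊢
    linarith
  have hsg : ((-1 : ℂ)) ^ (m + 1) * (-1) ^ n = (-1) ^ s := by
    rw [← pow_add, hm, show s + 1 + n + 1 + n = s + 2 * (n + 1) by ring, pow_add, pow_mul]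
    simp
  have he : q ^ (m.choose 2) * (lam q m s ^ (t + 1)) * (q ^ ((m + 1).choose 2) / q ^ ((s + 2).choose 2)) =
      q ^ (((t : ℤ) + 2) * m ^ 2 - (t + 1) * (s ^ 2 + s) - ((s + 2).choose 2 : ℕ)) := by
    rw [lam, ← zpow_natCast, ← zpow_natCast, ← zpow_natCast, ← zpow_natCast, ← zpow_mul,
      ← zpow_sub₀ h0, ← zpow_add₀ h0, ← zpow_add₀ h0]
    congr 1
    push_cast at hc ⊢
    linear_combination hc
  rw [gt, ← he, ← hsg, zz, hp']
  field_simp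

lemma norm_odd_le {q : ℂ} (hq1 : ‖q‖ < 1) (n : ℕ) : ‖1 - q ^ n‖ ≤ 2 := by
  have : ‖q ^ n‖ ≤ 1 := by rw [norm_pow]; exact pow_le_one₀ (norm_nonneg _) hq1.le
  calc _ ≤ ‖(1 : ℂ)‖ + ‖q ^ n‖ := norm_sub_le _ _
    _ ≤ 2 := by rw [norm_one]; linarith

lemma exp_lower (t m s : ℕ) (hs : s < m) :
    (m : ℤ) ≤ ((t : ℤ) + 2) * m ^ 2 - (t + 1) * (s ^ 2 + s) - ((s + 2).choose 2 : ℕ) := by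
  have a := ch2 (s + 2)
  push_cast at a ⊢
  obtain ⟨n, rfl⟩ : ∃ n, m = s + 1 + n := ⟨m - (s + 1), by omega⟩
  push_cast
  have hs0 : (0 : ℤ) ≤ s := by positivity
  have ht0 : (0 : ℤ) ≤ t := by positivity
  have hn0 : (0 : ℤ) ≤ n := by positivity
  have b1 : (0 : ℤ) ≤ t * s := by positivity
  have b2 : (0 : ℤ) ≤ t * n := by positivity
  have b3 : (0 : ℤ) ≤ s * n := by positivity
  have b4 : (0 : ℤ) ≤ t * s * n := by positivity
  have b5 : (0 : ℤ) ≤ t * n * n := by positivity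
  have b6 : (0 : ℤ) ≤ n * n := by positivity
  have b7 : (s : ℤ) ≤ s * s := by
    rcases Nat.eq_zero_or_pos s with h | h
    · simp [h]
    · exact_mod_cast Nat.le_mul_of_pos_left s h
  nlinarith

lemma gt_norm {q : ℂ} (hq0 : 0 < ‖q‖) (hq1 : ‖q‖ < 1) (t m s : ℕ) (hs : s < m) :
    ‖gt q t m s‖ ≤ 2 * ‖q‖ ^ m := by
  rw [gt, norm_mul, norm_mul, norm_zpow, norm_pow, norm_neg, norm_one, one_pow, one_mul, mul_comm]
  gcongr
  · exact norm_odd_le hq1 _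
  · rw [← zpow_natCast ‖q‖ m]
    exact zpow_le_zpow_right_of_le_one₀ hq0 hq1.le (exp_lower t m s hs)

lemma gam_norm {q : ℂ} (hq0 : 0 < ‖q‖) (hq1 : ‖q‖ < 1) (t m : ℕ) :
    ‖gam q t m‖ ≤ 2 * (m * ‖q‖ ^ m) := by
  rw [gam_eq (NR_of hq0 hq1)]
  calc _ ≤ ∑ s ∈ range m, 2 * ‖q‖ ^ m :=
        norm_sum_le_of_le _ fun s hs => gt_norm hq0 hq1 t m s (mem_range.1 hs)
    _ = _ := by simp; ring

lemma summ_mq {r : ℝ} (h0 : 0 ≤ r) (h1 : r < 1) :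
    Summable (fun M : ℕ => ((M + 1 : ℕ) : ℝ) * r ^ (M + 1)) := by
  have := summable_pow_mul_geometric_of_norm_lt_one (r := r) 1
    (by rwa [Real.norm_of_nonneg h0])
  simpa using (summable_nat_add_iff 1).2 this

noncomputable def FF (q x : ℂ) (t : ℕ) (z : ℕ × ℕ) : ℂ :=
  gam q t (z.1 + 1) * (q ^ (z.1 + 1))⁻¹ * (1 - q ^ (2 * (z.1 + 1))) *
    (wt q x (z.1 + z.2) / (QQ q z.2 * QQ q (z.2 + (2 * z.1 + 2))))

lemma FF_summ {q : ℂ} (hq0 : 0 < ‖q‖) (hq1 : ‖q‖ < 1) (x : ℂ) (t : ℕ) :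
    Summable (FF q x t) := by
  obtain ⟨C1, h1, h2⟩ := wt_bdd hq1 x
  obtain ⟨C2, h3, h4⟩ := QQ_bdd (NR_of hq0 hq1) hq1
  have hs := (((summ_mq hq0.le hq1).mul_of_nonneg (summable_geometric_of_lt_one hq0.le hq1)
    (fun n => by positivity) (fun p => by positivity)).mul_left (2 * 2 * (C1 * (C2 * C2))))
  refine Summable.of_norm_bounded hs fun z => ?_
  obtain ⟨M, n⟩ := z
  simp only [FF]
  rw [norm_mul, norm_mul, norm_mul, div_eq_mul_inv, mul_inv, norm_mul, norm_mul, norm_inv, norm_pow]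
  calc _ ≤ (2 * (((M + 1 : ℕ) : ℝ) * ‖q‖ ^ (M + 1))) * (‖q‖ ^ (M + 1))⁻¹ * 2 *
        ((C1 * ‖q‖ ^ (M + n + 1)) * (C2 * C2)) := by
        gcongr
        · exact gam_norm hq0 hq1 _ _
        · exact norm_odd_le hq1 _
        · exact h2 _
        · exact (h4 _).2
        · exact (h4 _).2
    _ = _ := by
        have : ‖q‖ ^ (M + n + 1) = ‖q‖ ^ (M + 1) * ‖q‖ ^ n := by ring
        rw [this]
        field_simp

lemma FF_conv {q : ℂ} (h : NR q) (x : ℂ) (t N : ℕ) :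
    wt q x N * DD q t N = ∑ z ∈ antidiagonal N, FF q x t z := by
  rw [DD_eq h, Finset.Nat.sum_antidiagonal_eq_sum_range_succ_mk, Finset.mul_sum]
  apply Finset.sum_congr rfl
  intro M hM
  rw [mem_range] at hM
  simp only [FF]
  rw [show M + (N - M) = N by omega, show N - M + (2 * M + 2) = N + M + 2 by omega]
  ring

lemma LHS_eq {q : ℂ} (hq0 : 0 < ‖q‖) (hq1 : ‖q‖ < 1) {x : ℂ} (hx : x ≠ 0)
    (h1 : ∀ M : ℕ, 1 - x * q ^ (M + 1) ≠ 0) (h2 : ∀ M : ℕ, 1 - q ^ (M + 1) / x ≠ 0) (t : ℕ) :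
    ∑' N : ℕ, wt q x N * DD q t N =
      (qPochInf q (x * q) * qPochInf q (q / x) / (qPochInf q q) ^ 2) *
      ∑' M : ℕ, gam q t (M + 1) * (1 / (1 - x * q ^ (M + 1)) +
        (q ^ (M + 1) / x) / (1 - q ^ (M + 1) / x)) := by
  have h := NR_of hq0 hq1
  have hs := FF_summ hq0 hq1 x t
  have e1 : ∑' N : ℕ, wt q x N * DD q t N = ∑' z, FF q x t z := by
    have hs2 := HasAntidiagonal.sigmaAntidiagonalEquivProd.summable_iff.2 hs
    rw [← HasAntidiagonal.sigmaAntidiagonalEquivProd.tsum_eq (FF q x t)]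
    refine Eq.trans ?_ (Summable.tsum_sigma hs2).symm
    refine tsum_congr fun N => ?_
    rw [FF_conv h, tsum_fintype, ← Finset.sum_coe_sort]
    rfl
  rw [e1, hs.tsum_prod, ← tsum_mul_left]
  refine tsum_congr fun M => ?_
  have hg : ∀ c : ℂ, c ≠ 0 → ∀ f : ℕ → ℂ, Summable (fun n => c * f n) → Summable f :=
    fun c hc f hf => (summable_mul_left_iff hc).1 hf
  have e2 : Summable (fun n => wt q x (M + n) / (QQ q n * QQ q (n + (2 * M + 2)))) := by
    obtain ⟨C1, h1, h2⟩ := wt_bdd hq1 x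
    obtain ⟨C2, h3, h4⟩ := QQ_bdd h hq1
    refine Summable.of_norm_bounded ((summable_geometric_of_lt_one hq0.le hq1).mul_left
      (C1 * (C2 * C2))) fun n => ?_
    rw [div_eq_mul_inv, mul_inv, norm_mul, norm_mul]
    calc _ ≤ (C1 * ‖q‖ ^ n) * (C2 * C2) := by
          gcongr
          · refine (h2 _).trans ?_
            gcongr ?_ * ?_
            apply pow_le_pow_of_le_one (norm_nonneg _) hq1.le
            omega
          · exact (h4 _).2
          · exact (h4 _).2
      _ = _ := by ring
  simp only [FF]
  rw [tsum_mul_left, qgauss h hq1 hx M (h1 M) (h2 M) e2]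
  have n1 := h1 M
  have n2 := h2 M
  have n3 := Qinf_ne h hq1
  have n4 : q ^ (M + 1) ≠ 0 := pow_ne_zero _ h.1
  rw [div_add_div _ _ n1 n2, show q ^ (2 * (M + 1)) = (q ^ (M + 1)) ^ 2 by ring]
  have e3 : 1 * (1 - q ^ (M + 1) / x) + (1 - x * q ^ (M + 1)) * (q ^ (M + 1) / x) =
    1 - (q ^ (M + 1)) ^ 2 := by field_simp; ring
  rw [e3]
  generalize 1 - x * q ^ (M + 1) = A at *
  generalize 1 - q ^ (M + 1) / x = B at *
  generalize 1 - (q ^ (M + 1)) ^ 2 = B at *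
  field_simp

def E0 (T r s : ℤ) : ℤ :=
  (r ^ 2 + s ^ 2 + 2 * (4 * T + 3) * r * s + 4 * (2 + T) * r + 4 * T * s - 4 * T - 1) / 8

noncomputable def hA (q : ℂ) (t M r : ℕ) : ℂ :=
  (-1) ^ ((r : ℤ) - (M + 1)) * q ^ (E0 (t + 1) r (2 * M + 1 - r))

abbrev IX := (Σ M : ℕ, Fin (2 * M + 2)) × ℕ

abbrev PosI := {p : ℤ × ℤ × ℤ // (0 ≤ p.1 ∧ 0 ≤ p.2.1 ∧ 0 ≤ p.2.2) ∧ p.1 % 2 ≠ p.2.1 % 2}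

abbrev NegI := {p : ℤ × ℤ × ℤ // (p.1 < 0 ∧ p.2.1 < 0 ∧ p.2.2 < 0) ∧ p.1 % 2 ≠ p.2.1 % 2}

def posMap (i : IX) : PosI :=
  ⟨((i.1.2 : ℕ), 2 * (i.1.1 : ℤ) + 1 - (i.1.2 : ℕ), (i.2 : ℤ)), by
    have := i.1.2.2
    dsimp only
    omega⟩

def negMap (i : IX) : NegI :=
  ⟨(-1 - (2 * (i.1.1 : ℤ) + 1 - (i.1.2 : ℕ)), -1 - ((i.1.2 : ℕ) : ℤ), -1 - (i.2 : ℤ)), by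
    have := i.1.2.2
    dsimp only
    omega⟩

lemma IX_ext {M M' u u' : ℕ} {r : Fin (2 * M + 2)} {r' : Fin (2 * M' + 2)} (h1 : M = M')
    (h2 : (r : ℕ) = r') (h3 : u = u') : ((⟨M, r⟩, u) : IX) = (⟨M', r'⟩, u') := by
  subst h1 h3
  have := Fin.ext h2
  subst this
  rfl

lemma posMap_bij : Function.Bijective posMap := by
  constructor
  · rintro ⟨⟨M, r⟩, u⟩ ⟨⟨M', r'⟩, u'⟩ h
    simp only [posMap, Subtype.mk.injEq, Prod.mk.injEq] at h
    exact IX_ext (by omega) (by omega) (by omega)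
  · rintro ⟨⟨r, s, u⟩, h⟩
    dsimp only at h
    refine ⟨(⟨((r + s - 1) / 2).toNat, ⟨r.toNat, by omega⟩⟩, u.toNat), ?_⟩
    simp only [posMap, Subtype.mk.injEq, Prod.mk.injEq]
    omega

lemma negMap_bij : Function.Bijective negMap := by
  constructor
  · rintro ⟨⟨M, r⟩, u⟩ ⟨⟨M', r'⟩, u'⟩ h
    simp only [negMap, Subtype.mk.injEq, Prod.mk.injEq] at h
    exact IX_ext (by omega) (by omega) (by omega)
  · rintro ⟨⟨r, s, u⟩, h⟩
    dsimp only at h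
    refine ⟨(⟨((-r - s - 3) / 2).toNat, ⟨(-1 - s).toNat, by omega⟩⟩, (-1 - u).toNat), ?_⟩
    simp only [negMap, Subtype.mk.injEq, Prod.mk.injEq]
    omega

lemma pos_term {q x : ℂ} (h0 : q ≠ 0) (t : ℕ) (i : IX) :
    heckeTerm3 q x ((t : ℤ) + 1) (posMap i).1 =
      hA q t i.1.1 i.1.2 * (x * q ^ (i.1.1 + 1)) ^ i.2 := by
  obtain ⟨⟨M, r⟩, u⟩ := i
  simp only [heckeTerm3, posMap, hA]
  rw [show ((r : ℕ) : ℤ) - (2 * M + 1 - (r : ℕ)) - 1 = ((r : ℕ) - (M + 1)) * 2 by ring,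
    Int.mul_ediv_cancel _ (by norm_num)]
  rw [show ∀ a : ℤ, a + 4 * (u : ℤ) * (((r : ℕ) : ℤ) + (2 * M + 1 - (r : ℕ)) + 1) =
    a + (((M + 1) * u : ℕ) : ℤ) * 8 by intro a; push_cast; ring,
    Int.add_mul_ediv_right _ _ (by norm_num), zpow_add₀ h0, zpow_natCast, zpow_natCast, pow_mul]
  rw [E0]
  ring

lemma neg_term {q x : ℂ} (h0 : q ≠ 0) (t : ℕ) (i : IX) :
    heckeTerm3 q x ((t : ℤ) + 1) (negMap i).1 =
      hA q t i.1.1 i.1.2 * (q ^ (i.1.1 + 1) / x) * (q ^ (i.1.1 + 1) / x) ^ i.2 := by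
  obtain ⟨⟨M, r⟩, u⟩ := i
  simp only [heckeTerm3, negMap, hA]
  rw [show -1 - (2 * (M : ℤ) + 1 - (r : ℕ)) - (-1 - ((r : ℕ) : ℤ)) - 1 =
    ((r : ℕ) - (M + 1)) * 2 by ring, Int.mul_ediv_cancel _ (by norm_num)]
  set R : ℤ := ((r : ℕ) : ℤ)
  rw [show (-1 - (2 * (M : ℤ) + 1 - R)) ^ 2 + (-1 - R) ^ 2
      + 2 * (4 * ((t : ℤ) + 1) + 3) * (-1 - (2 * (M : ℤ) + 1 - R)) * (-1 - R)
      + 4 * (2 + ((t : ℤ) + 1)) * (-1 - (2 * (M : ℤ) + 1 - R)) + 4 * ((t : ℤ) + 1) * (-1 - R)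
      - 4 * ((t : ℤ) + 1) - 1 + 4 * (-1 - (u : ℤ)) * (-1 - (2 * (M : ℤ) + 1 - R) + (-1 - R) + 1) =
    (R ^ 2 + (2 * M + 1 - R) ^ 2 + 2 * (4 * ((t : ℤ) + 1) + 3) * R * (2 * M + 1 - R)
      + 4 * (2 + ((t : ℤ) + 1)) * R
      + 4 * ((t : ℤ) + 1) * (2 * M + 1 - R) - 4 * ((t : ℤ) + 1) - 1)
      + (((M + 1) * (u + 1) : ℕ) : ℤ) * 8 by push_cast; ring,
    Int.add_mul_ediv_right _ _ (by norm_num), zpow_add₀ h0, zpow_natCast, pow_mul,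
    show (-1 - (u : ℤ)) = -((u + 1 : ℕ) : ℤ) by push_cast; ring, zpow_neg, zpow_natCast, E0,
    mul_assoc _ (q ^ (M + 1) / x), ← pow_succ', div_pow]
  ring

lemma E0_hi (t m j : ℕ) : E0 (t + 1) ((m : ℤ) + j) (2 * m - 1 - (m + j)) =
    -((t : ℤ) + 1) + (((t : ℤ) + 2) * m ^ 2 - (t + 1) * (j ^ 2 + j) - ((j + 2).choose 2 : ℕ)) +
      (2 * j + 1) := by
  have a := ch2 (j + 2)
  rw [E0]
  apply Int.ediv_eq_of_eq_mul_left (by norm_num)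
  push_cast at a ⊢
  linear_combination 4 * a

lemma E0_lo (t m j : ℕ) : E0 (t + 1) ((m : ℤ) - 1 - j) (2 * m - 1 - (m - 1 - j)) =
    -((t : ℤ) + 1) + (((t : ℤ) + 2) * m ^ 2 - (t + 1) * (j ^ 2 + j) - ((j + 2).choose 2 : ℕ)) := by
  have a := ch2 (j + 2)
  rw [E0]
  apply Int.ediv_eq_of_eq_mul_left (by norm_num)
  push_cast at a ⊢
  linear_combination 4 * a

lemma E0_lower (t M r : ℕ) (hr : r < 2 * M + 2) :
    -((t : ℤ) + 1) + (M + 1 : ℕ) ≤ E0 (t + 1) r (2 * M + 1 - r) := by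
  rcases lt_or_ge r (M + 1) with h | h
  · obtain ⟨j, hj⟩ : ∃ j, r + 1 + j = M + 1 := ⟨M - r, by omega⟩
    have e := E0_lo t (M + 1) j
    have l := exp_lower t (M + 1) j (by omega)
    have : (r : ℤ) = ((M + 1 : ℕ) : ℤ) - 1 - j := by push_cast; omega
    rw [this, show (2 * (M : ℤ) + 1 - (((M + 1 : ℕ) : ℤ) - 1 - j)) =
      2 * ((M + 1 : ℕ) : ℤ) - 1 - (((M + 1 : ℕ) : ℤ) - 1 - j) by push_cast; ring, e]
    linarith
  · obtain ⟨j, rfl⟩ : ∃ j, r = M + 1 + j := ⟨r - (M + 1), by omega⟩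
    have e := E0_hi t (M + 1) j
    have l := exp_lower t (M + 1) j (by omega)
    rw [show ((M + 1 + j : ℕ) : ℤ) = ((M + 1 : ℕ) : ℤ) + j by push_cast; ring,
      show (2 * (M : ℤ) + 1 - (((M + 1 : ℕ) : ℤ) + j)) =
      2 * ((M + 1 : ℕ) : ℤ) - 1 - (((M + 1 : ℕ) : ℤ) + j) by push_cast; ring, e]
    linarith

lemma hA_norm {q : ℂ} (hq0 : 0 < ‖q‖) (hq1 : ‖q‖ < 1) (t M r : ℕ) (hr : r < 2 * M + 2) :
    ‖hA q t M r‖ ≤ ‖q‖ ^ (-((t : ℤ) + 1)) * ‖q‖ ^ (M + 1) := by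
  rw [hA, norm_mul, norm_zpow, norm_zpow, norm_neg, norm_one, one_zpow, one_mul,
    ← zpow_natCast ‖q‖ (M + 1), ← zpow_add₀ hq0.ne']
  exact zpow_le_zpow_right_of_le_one₀ hq0 hq1.le (E0_lower t M r hr)

lemma hA_sum {q : ℂ} (h : NR q) (t M : ℕ) :
    ∑ r : Fin (2 * M + 2), hA q t M r = -(q ^ (-((t : ℤ) + 1)) * gam q t (M + 1)) := by
  rw [Fin.sum_univ_eq_sum_range (fun r => hA q t M r), show 2 * M + 2 = (M + 1) + (M + 1) by ring,
    Finset.sum_range_add, ← Finset.sum_range_reflect, ← Finset.sum_add_distrib, gam_eq h,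
    Finset.mul_sum, ← Finset.sum_neg_distrib]
  apply Finset.sum_congr rfl
  intro j hj
  rw [mem_range] at hj
  have h0 := h.1
  have c1 : ((M + 1 - 1 - j : ℕ) : ℤ) = ((M + 1 : ℕ) : ℤ) - 1 - j := by omega
  have c2 : ((M + 1 + j : ℕ) : ℤ) = ((M + 1 : ℕ) : ℤ) + j := by omega
  rw [hA, hA, c1, c2, show (2 * (M : ℤ) + 1 - (((M + 1 : ℕ) : ℤ) - 1 - j)) =
      2 * ((M + 1 : ℕ) : ℤ) - 1 - (((M + 1 : ℕ) : ℤ) - 1 - j) by push_cast; ring,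
      show (2 * (M : ℤ) + 1 - (((M + 1 : ℕ) : ℤ) + j)) =
      2 * ((M + 1 : ℕ) : ℤ) - 1 - (((M + 1 : ℕ) : ℤ) + j) by push_cast; ring, E0_lo, E0_hi,
      zpow_add₀ h0 _ (2 * (j : ℤ) + 1), zpow_add₀ h0 (-((t : ℤ) + 1)), gt,
      show ((M + 1 : ℕ) : ℤ) - 1 - j - (M + 1) = -((j + 1 : ℕ) : ℤ) by push_cast; ring,
      show ((M + 1 : ℕ) : ℤ) + j - (M + 1) = j by push_cast; ring, zpow_neg (-1 : ℂ),
      zpow_natCast, zpow_natCast, show (2 * (j : ℤ) + 1) = ((2 * j + 1 : ℕ) : ℤ) by push_cast; ring,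
      zpow_natCast q (2 * j + 1)]
  have : ((-1 : ℂ) ^ (j + 1))⁻¹ = - (-1) ^ j := by
    rw [← inv_pow, pow_succ]; norm_num
  rw [this]
  ring

lemma IX_summ {q : ℂ} (hq0 : 0 < ‖q‖) (hq1 : ‖q‖ < 1) (t : ℕ) (c : ℕ → ℂ) (y : ℕ → ℂ) (ρ : ℝ)
    (hρ : ρ < 1) (hρ0 : 0 ≤ ρ) (hc : ∀ M, ‖c M‖ ≤ 1) (hy : ∀ M, ‖y M‖ ≤ ρ) :
    Summable (fun i : IX => ‖hA q t i.1.1 i.1.2 * c i.1.1 * y i.1.1 ^ i.2‖) := by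
  have s1 : Summable (fun i : (Σ M : ℕ, Fin (2 * M + 2)) =>
      ‖q‖ ^ (-((t : ℤ) + 1)) * ‖q‖ ^ (i.1 + 1)) := by
    rw [summable_sigma_of_nonneg (fun i => by positivity)]
    refine ⟨fun M => (hasSum_fintype _).summable, ?_⟩
    refine ((summ_mq hq0.le hq1).mul_left (2 * ‖q‖ ^ (-((t : ℤ) + 1)))).congr fun M => ?_
    rw [tsum_fintype]
    simp
    ring
  have s2 := s1.mul_of_nonneg (summable_geometric_of_lt_one hρ0 hρ)
    (fun i => by positivity) (fun i => by positivity)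
  refine Summable.of_nonneg_of_le (fun _ => norm_nonneg _) (fun i => ?_) s2
  rw [norm_mul, norm_mul, norm_pow]
  calc _ ≤ (‖q‖ ^ (-((t : ℤ) + 1)) * ‖q‖ ^ (i.1.1 + 1)) * 1 * ρ ^ i.2 := by
        gcongr
        · exact hA_norm hq0 hq1 _ _ _ i.1.2.2
        · exact hc _
        · exact hy _
    _ = _ := by ring

lemma IX_tsum {q : ℂ} (hq0 : 0 < ‖q‖) (hq1 : ‖q‖ < 1) (t : ℕ) (c : ℕ → ℂ) (y : ℕ → ℂ) (ρ : ℝ)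
    (hρ : ρ < 1) (hρ0 : 0 ≤ ρ) (hc : ∀ M, ‖c M‖ ≤ 1) (hy : ∀ M, ‖y M‖ ≤ ρ) :
    HasSum (fun M => -(q ^ (-((t : ℤ) + 1)) * gam q t (M + 1)) * (c M / (1 - y M)))
      (∑' i : IX, hA q t i.1.1 i.1.2 * c i.1.1 * y i.1.1 ^ i.2) := by
  have s := (IX_summ hq0 hq1 t c y ρ hρ hρ0 hc hy).of_norm
  have a1 := s.hasSum.prod_fiberwise (fun i => (s.prod_factor i).hasSum)
  have a2 := a1.sigma (fun M => hasSum_fintype _)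
  have e : (fun M => -(q ^ (-((t : ℤ) + 1)) * gam q t (M + 1)) * (c M / (1 - y M))) =
      fun M => ∑ r : Fin (2 * M + 2), ∑' u : ℕ, hA q t M r * c M * y M ^ u := by
    funext M
    rw [← hA_sum (NR_of hq0 hq1), Finset.sum_mul]
    apply Finset.sum_congr rfl
    intro r _
    rw [tsum_mul_left, tsum_geometric_of_norm_lt_one ((hy M).trans_lt hρ)]
    ring
  rw [e]
  exact a2

end helpers

theorem stmt2 (t : ℕ) (q x : ℂ) (hq0 : 0 < ‖q‖) (hq1 : ‖q‖ < 1)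
    (hx1 : ‖q‖ < ‖x‖) (hx2 : ‖x‖ < ‖q‖⁻¹) :
    Summable (fun k : {k : Fin (t+1) → ℕ //
        (∀ i : Fin t, k i.castSucc ≤ k i.succ) ∧ 1 ≤ k 0} =>
      ‖UtTerm q x t k.1‖) ∧
    Summable (fun p : {p : ℤ × ℤ × ℤ // (0 ≤ p.1 ∧ 0 ≤ p.2.1 ∧ 0 ≤ p.2.2) ∧
        p.1 % 2 ≠ p.2.1 % 2} =>
      ‖heckeTerm3 q x ((t : ℤ) + 1) p.1‖) ∧
    Summable (fun p : {p : ℤ × ℤ × ℤ // (p.1 < 0 ∧ p.2.1 < 0 ∧ p.2.2 < 0) ∧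
        p.1 % 2 ≠ p.2.1 % 2} =>
      ‖heckeTerm3 q x ((t : ℤ) + 1) p.1‖) ∧
    q ^ (-(t : ℤ) - 1) *
      ∑' k : {k : Fin (t+1) → ℕ //
          (∀ i : Fin t, k i.castSucc ≤ k i.succ) ∧ 1 ≤ k 0},
        UtTerm q x t k.1 =
    -(qPochInf q (x * q) * qPochInf q (q / x) / (qPochInf q q) ^ 2) *
      ((∑' p : {p : ℤ × ℤ × ℤ // (0 ≤ p.1 ∧ 0 ≤ p.2.1 ∧ 0 ≤ p.2.2) ∧
            p.1 % 2 ≠ p.2.1 % 2},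
          heckeTerm3 q x ((t : ℤ) + 1) p.1) +
       (∑' p : {p : ℤ × ℤ × ℤ // (p.1 < 0 ∧ p.2.1 < 0 ∧ p.2.2 < 0) ∧
            p.1 % 2 ≠ p.2.1 % 2},
          heckeTerm3 q x ((t : ℤ) + 1) p.1)) := by
  have h := NR_of hq0 hq1
  have h0 := h.1
  have hxn : 0 < ‖x‖ := hq0.trans hx1
  have hx : x ≠ 0 := norm_pos_iff.1 hxn
  have r1 : ‖x‖ * ‖q‖ < 1 := by
    rwa [lt_inv_comm₀ hxn hq0, ← one_div, lt_div_iff₀ hxn, mul_comm] at hx2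
  have r2 : ‖q‖ / ‖x‖ < 1 := (div_lt_one hxn).2 hx1
  have pw : ∀ M : ℕ, ‖q‖ ^ (M + 1) ≤ ‖q‖ := fun M => by
    simpa using pow_le_pow_of_le_one hq0.le hq1.le (show 1 ≤ M + 1 by omega)
  have b1 : ∀ M : ℕ, ‖x * q ^ (M + 1)‖ ≤ ‖x‖ * ‖q‖ := fun M => by
    rw [norm_mul, norm_pow]
    exact mul_le_mul_of_nonneg_left (pw M) hxn.le
  have b2 : ∀ M : ℕ, ‖q ^ (M + 1) / x‖ ≤ ‖q‖ / ‖x‖ := fun M => by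
    rw [norm_div, norm_pow]
    exact div_le_div_of_nonneg_right (pw M) hxn.le
  have ne_of : ∀ z : ℂ, ‖z‖ < 1 → 1 - z ≠ 0 := fun z hz hc => by
    rw [← sub_eq_zero.1 hc, norm_one] at hz
    exact lt_irrefl _ hz
  have n1 : ∀ M : ℕ, 1 - x * q ^ (M + 1) ≠ 0 := fun M => ne_of _ ((b1 M).trans_lt r1)
  have n2 : ∀ M : ℕ, 1 - q ^ (M + 1) / x ≠ 0 := fun M => ne_of _ ((b2 M).trans_lt r2)
  have c2 : ∀ M : ℕ, ‖q ^ (M + 1) / x‖ ≤ 1 := fun M => (b2 M).trans r2.le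
  have c1 : ∀ M : ℕ, ‖(fun _ : ℕ => (1 : ℂ)) M‖ ≤ 1 := fun M => by simp
  have sP := IX_summ hq0 hq1 t (fun _ => 1) (fun M => x * q ^ (M + 1)) _ r1 (by positivity) c1 b1
  have sN := IX_summ hq0 hq1 t (fun M => q ^ (M + 1) / x) (fun M => q ^ (M + 1) / x) _ r2
    (by positivity) c2 b2
  have tP := IX_tsum hq0 hq1 t (fun _ => 1) (fun M => x * q ^ (M + 1)) _ r1 (by positivity) c1 b1
  have tN := IX_tsum hq0 hq1 t (fun M => q ^ (M + 1) / x) (fun M => q ^ (M + 1) / x) _ r2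
    (by positivity) c2 b2
  let eP : IX ≃ PosI := Equiv.ofBijective posMap posMap_bij
  let eN : IX ≃ NegI := Equiv.ofBijective negMap negMap_bij
  refine ⟨K_summ h hq1 x t, ?_, ?_, ?_⟩
  · refine eP.summable_iff.1 (sP.congr fun i => ?_)
    simp only [Function.comp_apply, eP, Equiv.ofBijective_apply, pos_term h0, mul_one]
  · refine eN.summable_iff.1 (sN.congr fun i => ?_)
    simp only [Function.comp_apply, eN, Equiv.ofBijective_apply, neg_term h0]
  · have vP : (∑' p : PosI, heckeTerm3 q x ((t : ℤ) + 1) p.1) =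
        ∑' i : IX, hA q t i.1.1 i.1.2 * 1 * (x * q ^ (i.1.1 + 1)) ^ i.2 := by
      rw [← eP.tsum_eq]
      refine tsum_congr fun i => ?_
      simp only [eP, Equiv.ofBijective_apply, pos_term h0, mul_one]
    have vN : (∑' p : NegI, heckeTerm3 q x ((t : ℤ) + 1) p.1) =
        ∑' i : IX, hA q t i.1.1 i.1.2 * (q ^ (i.1.1 + 1) / x) * (q ^ (i.1.1 + 1) / x) ^ i.2 := by
      rw [← eN.tsum_eq]
      refine tsum_congr fun i => ?_
      simp only [eN, Equiv.ofBijective_apply, neg_term h0]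
    have tS := (tP.add tN).tsum_eq
    rw [vP, vN, ← tS, K_tsum h, main_fiber h hq1, LHS_eq hq0 hq1 hx n1 n2, ← tsum_mul_left,
      ← tsum_mul_left, ← tsum_mul_left]
    refine tsum_congr fun M => ?_
    rw [show -(t : ℤ) - 1 = -((t : ℤ) + 1) by ring]
    ring
end

section
/- Let t ≥ 1 and n ≥ 1 be integers and let q ∈ ℂ with 0 < |q| < 1. Then Σ_{ℓ=0}^{n} [ q^{(t+1)ℓ^2 - ℓ} (1 - q^{2ℓ}) / ((q;q)_{n-ℓ} (q;q)_{n+ℓ}) ] · Σ_{k=-ℓ}^{ℓ-1} (-1)^k q^{-(2t+1)k(k+1)/2 + k} = Σ_{n ≥ n_{2t-1} ≥ n_{2t-2} ≥ … ≥ n_1 ≥ 0} (-1)^{n_t} (1 - q^{n_t - χ(t ≥ 2)·n_{t-1}}) · q^{Σ_{i=1}^{t-1} n_{t+i}^2 + n_t(n_t-1)/2 - Σ_{i=1}^{t-1} n_i n_{i+1} - Σ_{i=1}^{t-2} n_i} / ( (q;q)_{n - n_{2t-1}} (q;q)_{n_{2t-1} - n_{2t-2}} ⋯ (q;q)_{n_2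 - n_1} (q;q)_{n_1} ), where the right-hand sum is over all weakly decreasing (2t-1)-tuples of nonnegative integers bounded above by n. (The left-hand side equals -q^{t-n} C_{n-1}(T*_{(2,2t+1)}; q), the coefficient in the cyclotomic expansion of the colored Jones polynomial of the left-handed torus knot T*_{(2,2t+1)}.) -/
open Finset

/-- The summand of the right-hand multisum, for a weakly decreasing tuple
`n ≥ n_{2t-1} ≥ … ≥ n_1 ≥ 0`; here the paper's `t` equals `t+1`, the tuple has
length `2t+1`, and `A j = n_{j+1}` (0-based). -/
noncomputable def CTerm (q : ℂ) (t n : ℕ) (A : ℕ → ℕ) : ℂ :=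
  (-1 : ℂ) ^ (A t) *
  (1 - q ^ ((A t : ℤ) - (if 1 ≤ t then (A (t - 1) : ℤ) else 0))) *
  q ^ ((∑ i ∈ Finset.range t, (A (t + 1 + i) : ℤ) ^ 2)
      + (A t : ℤ) * ((A t : ℤ) - 1) / 2
      - (∑ i ∈ Finset.range t, (A i : ℤ) * (A (i + 1) : ℤ))
      - (∑ i ∈ Finset.range (t - 1), (A i : ℤ))) /
  (qPoch q q (n - A (2 * t)) *
    (∏ i ∈ Finset.range (2 * t), qPoch q q (A (i + 1) - A i)) *
    qPoch q q (A 0))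

namespace CJ

noncomputable def e (q : ℂ) (k : ℤ) : ℂ := if 0 ≤ k then (qPoch q q k.toNat)⁻¹ else 0

/-- triangular numbers -/
def P (y : ℤ) : ℤ := y * (y - 1) / 2

lemma two_P (y : ℤ) : 2 * P y = y * (y - 1) := by
  unfold P
  apply Int.mul_ediv_cancel'
  have := Int.even_mul_pred_self y
  exact this.two_dvd

lemma e_neg (q : ℂ) {k : ℤ} (h : k < 0) : e q k = 0 := by
  unfold e; rw [if_neg (by omega)]

lemma e_nat (q : ℂ) (k : ℕ) : e q k = (qPoch q q k)⁻¹ := by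
  unfold e; simp

lemma e_zero (q : ℂ) : e q 0 = 1 := by
  unfold e; simp [qPoch]

lemma e_rec {q : ℂ} (h : ∀ k : ℕ, q ^ (k + 1) ≠ 1) (k : ℤ) :
    (1 - q ^ k) * e q k = e q (k - 1) := by
  rcases lt_trichotomy k 0 with hk | hk | hk
  · rw [e_neg q hk, e_neg q (by omega)]; simp
  · subst hk; rw [e_neg q (by omega : (0:ℤ) - 1 < 0)]; simp
  · obtain ⟨m, rfl⟩ : ∃ m : ℕ, k = (m : ℤ) + 1 := ⟨(k - 1).toNat, by omega⟩
    have h1 : (m : ℤ) + 1 - 1 = m := by ring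
    rw [h1, e_nat]
    have h2 := e_nat q (m + 1)
    push_cast at h2
    rw [h2, qPoch, Finset.prod_range_succ, ← qPoch, mul_inv]
    have h3 : q ^ ((m : ℤ) + 1) = q * q ^ m := by
      have : ((m : ℤ) + 1) = ((m + 1 : ℕ) : ℤ) := by push_cast; ring
      rw [this, zpow_natCast, pow_succ]; ring
    rw [h3]
    have h4 : 1 - q * q ^ m ≠ 0 := by
      intro h5
      apply h m
      rw [pow_succ]; linear_combination -h5
    field_simp

lemma L1' {q : ℂ} (hq : q ≠ 0) (h : ∀ k : ℕ, q ^ (k + 1) ≠ 1) (M : ℕ) : ∀ c : ℤ,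
    ∑ j ∈ Finset.range (M + 1), q ^ ((j : ℤ) ^ 2 + c * j) * e q (M - j) * e q j * e q (c + j)
      = e q M * e q (M + c) := by
  induction M with
  | zero => intro c; simp [e_zero]
  | succ M ih =>
    intro c
    have hM : (1 - q ^ ((M : ℤ) + 1)) ≠ 0 := by
      intro h5; apply h M
      have : ((M : ℤ) + 1) = ((M + 1 : ℕ) : ℤ) := by push_cast; ring
      rw [this, zpow_natCast] at h5
      linear_combination -h5
    apply mul_left_cancel₀ hM
    have A := ih c
    have B := ih (c + 1)
    have key : (1 - q ^ ((M : ℤ) + 1)) * ∑ j ∈ Finset.range (M + 1 + 1),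
        q ^ ((j : ℤ) ^ 2 + c * j) * e q ((M + 1 : ℕ) - j) * e q j * e q (c + j)
        = (∑ j ∈ Finset.range (M + 1 + 1),
          q ^ ((j : ℤ) ^ 2 + c * j) * e q (M - j) * e q j * e q (c + j))
        + ∑ j ∈ Finset.range (M + 1 + 1),
          q ^ ((j : ℤ) ^ 2 + c * j + (M + 1 - j)) * e q (M + 1 - j) * e q (j - 1) * e q (c + j) := by
      rw [Finset.mul_sum, ← Finset.sum_add_distrib]
      apply Finset.sum_congr rfl
      intro j _
      have r1 := e_rec h (M + 1 - j)
      have r2 := e_rec h j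
      have r3 : (M : ℤ) + 1 - j - 1 = M - j := by ring
      rw [r3] at r1
      rw [← r1, ← r2, zpow_add₀ hq _ ((M : ℤ) + 1 - j)]
      have r4 : q ^ ((M : ℤ) + 1) = q ^ ((M : ℤ) + 1 - j) * q ^ (j : ℤ) := by
        rw [← zpow_add₀ hq]; congr 1; ring
      rw [r4]
      push_cast
      ring
    rw [key, Finset.sum_range_succ, Finset.sum_range_succ' _ (M + 1)]
    rw [A, e_neg q (by push_cast; omega : (M : ℤ) - ((M + 1 : ℕ) : ℤ) < 0),
      e_neg q (by omega : ((0 : ℕ) : ℤ) - 1 < 0)]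
    have C : ∑ k ∈ Finset.range (M + 1),
        q ^ (((k + 1 : ℕ) : ℤ) ^ 2 + c * ((k + 1 : ℕ) : ℤ) + (M + 1 - ((k + 1 : ℕ) : ℤ)))
          * e q (M + 1 - ((k + 1 : ℕ) : ℤ))
          * e q (((k + 1 : ℕ) : ℤ) - 1) * e q (c + ((k + 1 : ℕ) : ℤ))
        = q ^ ((M : ℤ) + 1 + c) * (e q M * e q (M + (c + 1))) := by
      rw [← B, Finset.mul_sum]
      apply Finset.sum_congr rfl
      intro j _
      have : q ^ (((j + 1 : ℕ) : ℤ) ^ 2 + c * ((j + 1 : ℕ) : ℤ) + (M + 1 - ((j + 1 : ℕ) : ℤ)))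
          = q ^ ((M : ℤ) + 1 + c) * q ^ ((j : ℤ) ^ 2 + (c + 1) * j) := by
        rw [← zpow_add₀ hq]; congr 1; push_cast; ring
      rw [this]
      have a1 : (M : ℤ) + 1 - ((j + 1 : ℕ) : ℤ) = M - j := by push_cast; ring
      have a2 : ((j + 1 : ℕ) : ℤ) - 1 = j := by push_cast; ring
      have a3 : c + ((j + 1 : ℕ) : ℤ) = c + 1 + j := by push_cast; ring
      rw [a1, a2, a3]; ring
    rw [C]
    have r1 := e_rec h ((M : ℤ) + 1)
    have r2 := e_rec h ((M : ℤ) + 1 + c)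
    have a1 : (M : ℤ) + 1 - 1 = M := by ring
    have a2 : (M : ℤ) + 1 + c - 1 = M + c := by ring
    have a3 : (M : ℤ) + (c + 1) = M + 1 + c := by ring
    rw [a1] at r1; rw [a2] at r2; rw [a3, ← r2, ← r1]
    push_cast
    ring

lemma L2' {q : ℂ} (hq : q ≠ 0) (h : ∀ k : ℕ, q ^ (k + 1) ≠ 1) (M : ℕ) : ∀ c : ℤ,
    ∑ j ∈ Finset.range (M + 1), (-1 : ℂ) ^ j * q ^ (P j + j - M * j) * e q (M - j) * e q j
        * e q (c + j)
      = (-1) ^ M * q ^ (M * c + P M + M) * (e q M * e q (M + c)) := by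
  induction M with
  | zero => intro c; simp [e_zero, P]
  | succ M ih =>
    intro c
    have hM : (1 - q ^ ((M : ℤ) + 1)) ≠ 0 := by
      intro h5; apply h M
      have : ((M : ℤ) + 1) = ((M + 1 : ℕ) : ℤ) := by push_cast; ring
      rw [this, zpow_natCast] at h5
      linear_combination -h5
    apply mul_left_cancel₀ hM
    have A := ih c
    have B := ih (c + 1)
    have key : (1 - q ^ ((M : ℤ) + 1)) * ∑ j ∈ Finset.range (M + 1 + 1),
        (-1 : ℂ) ^ j * q ^ (P j + j - (M + 1 : ℕ) * j) * e q ((M + 1 : ℕ) - j) * e q j * e q (c + j)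
        = (∑ j ∈ Finset.range (M + 1 + 1),
          (-1 : ℂ) ^ j * q ^ (P j + j - M * j) * e q (M - j) * e q j * e q (c + j))
        + ∑ j ∈ Finset.range (M + 1 + 1),
          (-1 : ℂ) ^ j * q ^ (P j + j - (M + 1) * j) * e q (M + 1 - j) * e q (j - 1)
            * e q (c + j) := by
      rw [Finset.mul_sum, ← Finset.sum_add_distrib]
      apply Finset.sum_congr rfl
      intro j _
      have r1 := e_rec h (M + 1 - j)
      have r2 := e_rec h j
      have r3 : (M : ℤ) + 1 - j - 1 = M - j := by ring
      rw [r3] at r1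
      rw [← r1, ← r2]
      have r4 : q ^ ((M : ℤ) + 1) = q ^ ((M : ℤ) + 1 - j) * q ^ (j : ℤ) := by
        rw [← zpow_add₀ hq]; congr 1; ring
      have r5 : q ^ (P j + j - M * j) = q ^ (P j + j - (M + 1) * j) * q ^ (j : ℤ) := by
        rw [← zpow_add₀ hq]; congr 1; ring
      rw [r4, r5]
      push_cast
      ring
    rw [key, Finset.sum_range_succ, Finset.sum_range_succ' _ (M + 1)]
    rw [A, e_neg q (by push_cast; omega : (M : ℤ) - ((M + 1 : ℕ) : ℤ) < 0),
      e_neg q (by omega : ((0 : ℕ) : ℤ) - 1 < 0)]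
    have C : ∑ k ∈ Finset.range (M + 1),
        (-1 : ℂ) ^ (k + 1) * q ^ (P ((k + 1 : ℕ) : ℤ) + ((k + 1 : ℕ) : ℤ)
            - (M + 1) * ((k + 1 : ℕ) : ℤ))
          * e q (M + 1 - ((k + 1 : ℕ) : ℤ))
          * e q (((k + 1 : ℕ) : ℤ) - 1) * e q (c + ((k + 1 : ℕ) : ℤ))
        = - q ^ (-(M : ℤ)) * ((-1) ^ M * q ^ (M * (c + 1) + P M + M)
            * (e q M * e q (M + (c + 1)))) := by
      rw [← B, Finset.mul_sum]
      apply Finset.sum_congr rfl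
      intro j _
      have : q ^ (P ((j + 1 : ℕ) : ℤ) + ((j + 1 : ℕ) : ℤ) - (M + 1) * ((j + 1 : ℕ) : ℤ))
          = q ^ (-(M : ℤ)) * q ^ (P j + j - M * j) := by
        rw [← zpow_add₀ hq]; congr 1
        have p1 := two_P j
        have p2 := two_P ((j + 1 : ℕ) : ℤ)
        push_cast at *
        linarith
      rw [this]
      have a1 : (M : ℤ) + 1 - ((j + 1 : ℕ) : ℤ) = M - j := by push_cast; ring
      have a2 : ((j + 1 : ℕ) : ℤ) - 1 = j := by push_cast; ring
      have a3 : c + ((j + 1 : ℕ) : ℤ) = c + 1 + j := by push_cast; ring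
      rw [a1, a2, a3]; ring
    rw [C]
    have r1 := e_rec h ((M : ℤ) + 1)
    have r2 := e_rec h ((M : ℤ) + 1 + c)
    have a1 : (M : ℤ) + 1 - 1 = M := by ring
    have a2 : (M : ℤ) + 1 + c - 1 = M + c := by ring
    have a3 : (M : ℤ) + (c + 1) = M + 1 + c := by ring
    rw [a1] at r1; rw [a2] at r2; rw [a3, ← r2, ← r1]
    have z1 : q ^ (M * (c + 1) + P M + M) = q ^ (M * c + P M + M) * q ^ (M : ℤ) := by
      rw [← zpow_add₀ hq]; congr 1; ring
    have z2 : q ^ (((M + 1 : ℕ) : ℤ) * c + P ((M + 1 : ℕ) : ℤ) + ((M + 1 : ℕ) : ℤ))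
        = q ^ (M * c + P M + M) * q ^ ((M : ℤ) + 1 + c) := by
      rw [← zpow_add₀ hq]; congr 1
      have p1 := two_P M
      have p2 := two_P ((M + 1 : ℕ) : ℤ)
      push_cast at *
      linarith
    have z3 : q ^ (-(M : ℤ)) * q ^ (M : ℤ) = 1 := by
      rw [← zpow_add₀ hq]; simp
    rw [z1, z2]
    push_cast
    linear_combination (-(-1) ^ M * q ^ (M * c + P M + M) * (1 - q ^ ((M : ℤ) + 1))
      * e q ((M : ℤ) + 1) * e q ((M : ℤ) + 1 + c)) * z3

lemma sum_shift (n m r : ℕ) (hrm : r ≤ m) (hmn : m ≤ n) (f : ℕ → ℂ)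
    (h1 : ∀ y, y < r → f y = 0) (h2 : ∀ y, m < y → f y = 0) :
    ∑ y ∈ Finset.range (n + 1), f y = ∑ j ∈ Finset.range (m - r + 1), f (r + j) := by
  have a : ∑ y ∈ Finset.range (n + 1), f y = ∑ y ∈ Finset.range (r + (m - r + 1)), f y := by
    symm
    apply Finset.sum_subset
    · intro y; simp; omega
    · intro y _ hy
      apply h2
      simp at hy; omega
  rw [a, Finset.sum_range_add, Finset.sum_eq_zero, zero_add]
  intro y hy
  exact h1 y (by simpa using hy)

lemma L1 {q : ℂ} (hq : q ≠ 0) (h : ∀ k : ℕ, q ^ (k + 1) ≠ 1) (n N l : ℕ) (hN : N ≤ n) :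
    ∑ y ∈ Finset.range (n + 1), q ^ ((y : ℤ) ^ 2) * e q (N - y) * (e q (y - l) * e q (y + l))
      = q ^ ((l : ℤ) ^ 2) * (e q (N - l) * e q (N + l)) := by
  by_cases hl : l ≤ N
  · rw [sum_shift n N l hl hN]
    · obtain ⟨M, rfl⟩ := Nat.exists_eq_add_of_le hl
      have B := L1' hq h M (2 * l)
      have a1 : ((l + M : ℕ) : ℤ) - l = M := by push_cast; ring
      have a2 : ((l + M : ℕ) : ℤ) + l = M + 2 * l := by push_cast; ring
      rw [a1, a2, ← B, Finset.mul_sum, Nat.add_sub_cancel_left]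
      apply Finset.sum_congr rfl
      intro j _
      have z : q ^ (((l + j : ℕ) : ℤ) ^ 2) = q ^ ((l : ℤ) ^ 2) * q ^ ((j : ℤ) ^ 2 + 2 * l * j) := by
        rw [← zpow_add₀ hq]; congr 1; push_cast; ring
      have b1 : ((l + M : ℕ) : ℤ) - ((l + j : ℕ) : ℤ) = M - j := by push_cast; ring
      have b2 : ((l + j : ℕ) : ℤ) - l = j := by push_cast; ring
      have b3 : ((l + j : ℕ) : ℤ) + l = 2 * l + j := by push_cast; ring
      rw [z, b1, b2, b3]; ring
    · intro y hy; rw [e_neg q (by omega : (y : ℤ) - l < 0)]; ring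
    · intro y hy; rw [e_neg q (by omega : (N : ℤ) - y < 0)]; ring
  · rw [e_neg q (by omega : (N : ℤ) - l < 0), Finset.sum_eq_zero]
    · ring
    intro y _
    by_cases hy : y < l
    · rw [e_neg q (by omega : (y : ℤ) - l < 0)]; ring
    · rw [e_neg q (by omega : (N : ℤ) - y < 0)]; ring

lemma L2 {q : ℂ} (hq : q ≠ 0) (h : ∀ k : ℕ, q ^ (k + 1) ≠ 1) (n m r : ℕ) (hN : m ≤ n) :
    ∑ y ∈ Finset.range (n + 1), (-1 : ℂ) ^ y * q ^ (P y + y - m * y) * e q (m - y)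
        * (e q (y - r) * e q (y + r + 1))
      = q ^ (-(r : ℤ) ^ 2 - r) * ((-1) ^ m * q ^ (P m + 2 * m))
        * (e q (m - r) * e q (m + r + 1)) := by
  by_cases hl : r ≤ m
  · rw [sum_shift n m r hl hN]
    · obtain ⟨M, rfl⟩ := Nat.exists_eq_add_of_le hl
      have B := L2' hq h M (2 * r + 1)
      have a1 : ((r + M : ℕ) : ℤ) - r = M := by push_cast; ring
      have a2 : ((r + M : ℕ) : ℤ) + r + 1 = M + (2 * r + 1) := by push_cast; ring
      have z0 : q ^ (-(r : ℤ) ^ 2 - r) * ((-1) ^ (r + M) * q ^ (P (r + M : ℕ) + 2 * (r + M : ℕ)))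
        = ((-1) ^ r * q ^ (P r + r - (r + M) * r)) * ((-1) ^ M * q ^ (M * (2 * r + 1) + P M + M)) := by
        have : q ^ (-(r : ℤ) ^ 2 - r) * q ^ (P (r + M : ℕ) + 2 * (r + M : ℕ))
            = q ^ (P r + r - (r + M) * r) * q ^ (M * (2 * r + 1) + P M + M) := by
          rw [← zpow_add₀ hq, ← zpow_add₀ hq]; congr 1
          have p1 := two_P r
          have p2 := two_P M
          have p3 := two_P (r + M : ℕ)
          push_cast at *
          linarith
        rw [pow_add]
        linear_combination ((-1) ^ r * (-1) ^ M) * this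
      rw [z0, a1, a2, mul_assoc ((-1) ^ r * _), ← B, Finset.mul_sum, Nat.add_sub_cancel_left]
      apply Finset.sum_congr rfl
      intro j _
      have z : q ^ (P (r + j : ℕ) + (r + j : ℕ) - (r + M : ℕ) * (r + j : ℕ))
          = q ^ (P r + r - (r + M) * r) * q ^ (P j + j - M * j) := by
        rw [← zpow_add₀ hq]; congr 1
        have p1 := two_P r
        have p2 := two_P j
        have p3 := two_P (r + j : ℕ)
        push_cast at *
        linarith
      have b1 : ((r + M : ℕ) : ℤ) - ((r + j : ℕ) : ℤ) = M - j := by push_cast; ring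
      have b2 : ((r + j : ℕ) : ℤ) - r = j := by push_cast; ring
      have b3 : ((r + j : ℕ) : ℤ) + r + 1 = 2 * r + 1 + j := by push_cast; ring
      rw [z, b1, b2, b3, pow_add]; ring
    · intro y hy; rw [e_neg q (by omega : (y : ℤ) - r < 0)]; ring
    · intro y hy; rw [e_neg q (by omega : (m : ℤ) - y < 0)]; ring
  · rw [e_neg q (by omega : (m : ℤ) - r < 0), Finset.sum_eq_zero]
    · ring
    intro y _
    by_cases hy : y < r
    · rw [e_neg q (by omega : (y : ℤ) - r < 0)]; ring
    · rw [e_neg q (by omega : (m : ℤ) - y < 0)]; ring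

lemma L3aux {q : ℂ} (hq : q ≠ 0) (h : ∀ k : ℕ, q ^ (k + 1) ≠ 1) (m : ℤ) (s : ℕ) :
    (1 - q ^ m) * ∑ r ∈ Finset.range s, (-1 : ℂ) ^ r * q ^ (P r) * (1 - q ^ (2 * (r : ℤ) + 1))
        * (e q (m - r) * e q (m + r + 1))
      = -(-1) ^ s * q ^ (P s) * (1 - q ^ (s : ℤ)) * (e q (m - s) * e q (m + s)) := by
  induction s with
  | zero => simp
  | succ s ih =>
    rw [Finset.sum_range_succ, mul_add, ih]
    have r1 := e_rec h (m - s)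
    have r2 := e_rec h (m + s + 1)
    have a1 : m - ((s + 1 : ℕ) : ℤ) = m - s - 1 := by push_cast; ring
    have a2 : m + ((s + 1 : ℕ) : ℤ) = m + s + 1 := by push_cast; ring
    have a3 : m + (s : ℤ) + 1 - 1 = m + s := by ring
    rw [a3] at r2
    rw [a1, a2, ← r1, ← r2]
    have z1 : q ^ (P (s + 1 : ℕ)) = q ^ (P s) * q ^ (s : ℤ) := by
      rw [← zpow_add₀ hq]; congr 1
      have p1 := two_P s
      have p2 := two_P (s + 1 : ℕ)
      push_cast at *
      linarith
    have z2 : q ^ (2 * (s : ℤ) + 1) = q ^ (s : ℤ) * q ^ (s : ℤ) * q := by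
      rw [← zpow_add₀ hq, ← zpow_add_one₀ hq]; congr 1; ring
    have z3 : q ^ m = q ^ (m - s) * q ^ (s : ℤ) := by
      rw [← zpow_add₀ hq]; congr 1; ring
    have z4 : q ^ (m + s + 1) = q ^ (m - s) * q ^ (s : ℤ) * q ^ (s : ℤ) * q := by
      rw [← zpow_add₀ hq, ← zpow_add₀ hq, ← zpow_add_one₀ hq]; congr 1; ring
    have z5 : q ^ ((s + 1 : ℕ) : ℤ) = q ^ (s : ℤ) * q := by
      rw [← zpow_add_one₀ hq]; push_cast; rfl
    rw [z1, z2, z3, z4, z5]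
    ring

lemma L3 {q : ℂ} (hq : q ≠ 0) (h : ∀ k : ℕ, q ^ (k + 1) ≠ 1) (n m : ℕ) (hm : m ≤ n) :
    ∑ r ∈ Finset.range (n + 1), (-1 : ℂ) ^ r * q ^ (P r) * (1 - q ^ (2 * (r : ℤ) + 1))
        * (e q (m - r) * e q (m + r + 1)) = if m = 0 then 1 else 0 := by
  split_ifs with h0
  · subst h0
    rw [Finset.sum_range_succ', Finset.sum_eq_zero]
    · have := e_rec h 1
      simp [e_zero] at this
      simp [e_zero, P, this]
    · intro r _
      rw [e_neg q (by omega : ((0 : ℕ) : ℤ) - ((r + 1 : ℕ) : ℤ) < 0)]; ring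
  · have A := L3aux hq h m (n + 1)
    rw [e_neg q (by push_cast; omega : (m : ℤ) - ((n + 1 : ℕ) : ℤ) < 0)] at A
    have hM : (1 - q ^ (m : ℤ)) ≠ 0 := by
      intro h5; apply h (m - 1)
      rw [zpow_natCast] at h5
      rw [Nat.sub_add_cancel (by omega)]
      linear_combination -h5
    apply mul_left_cancel₀ hM
    rw [A]; ring

lemma L4aux {q : ℂ} (hq : q ≠ 0) (h : ∀ k : ℕ, q ^ (k + 1) ≠ 1) (p : ℤ) (r s : ℕ) :
    ∑ l ∈ Finset.range (r + 1 + s), (if r < l then q ^ ((l : ℤ) ^ 2 - l) * (1 - q ^ (2 * (l : ℤ)))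
        * (e q (p - l) * e q (p + l)) else 0)
      = q ^ ((r : ℤ) ^ 2 + r) * (e q (p - 1 - r) * e q (p + r))
        - q ^ (((r + s : ℕ) : ℤ) ^ 2 + (r + s : ℕ)) * (e q (p - 1 - (r + s : ℕ)) * e q (p + (r + s : ℕ))) := by
  induction s with
  | zero =>
    rw [Finset.sum_eq_zero]
    · simp
    · intro l hl
      rw [if_neg]; simp at hl; omega
  | succ s ih =>
    rw [← add_assoc, Finset.sum_range_succ, ih, if_pos (by omega)]
    have r1 := e_rec h (p - (r + 1 + s : ℕ))
    have r2 := e_rec h (p + (r + 1 + s : ℕ))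
    have a1 : p - 1 - ((r + (s + 1) : ℕ) : ℤ) = p - (r + 1 + s : ℕ) - 1 := by push_cast; ring
    have a2 : p + ((r + (s + 1) : ℕ) : ℤ) = p + (r + 1 + s : ℕ) := by push_cast; ring
    have a3 : p + ((r + 1 + s : ℕ) : ℤ) - 1 = p + (r + s : ℕ) := by push_cast; ring
    have a4 : p - 1 - ((r + s : ℕ) : ℤ) = p - (r + 1 + s : ℕ) := by push_cast; ring
    rw [a3] at r2
    rw [a1, a2, a4, ← r1, ← r2]
    have a5 : (r + (s + 1) : ℕ) = r + 1 + s := by ring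
    rw [a5]
    have z1 : q ^ (((r + s : ℕ) : ℤ) ^ 2 + (r + s : ℕ)) = q ^ (((r + 1 + s : ℕ) : ℤ) ^ 2 - (r + 1 + s : ℕ)) := by
      congr 1; push_cast; ring
    rw [z1]
    set L : ℤ := ((r + 1 + s : ℕ) : ℤ)
    have z2 : q ^ (L ^ 2 + L) = q ^ (L ^ 2 - L) * (q ^ L * q ^ L) := by
      rw [← zpow_add₀ hq, ← zpow_add₀ hq]; congr 1; ring
    have z3 : q ^ (2 * L) = q ^ L * q ^ L := by
      rw [← zpow_add₀ hq]; congr 1; ring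
    have z4 : q ^ (p + L) = q ^ (p - L) * (q ^ L * q ^ L) := by
      rw [← zpow_add₀ hq, ← zpow_add₀ hq]; congr 1; ring
    rw [z2, z3, z4]; ring

lemma L4 {q : ℂ} (hq : q ≠ 0) (h : ∀ k : ℕ, q ^ (k + 1) ≠ 1) (n p r : ℕ) (hp : p ≤ n)
    (hr : r ≤ n) :
    (e q (p - 1 - r) * e q (p + r)) = q ^ (-(r : ℤ) ^ 2 - r) *
      ∑ l ∈ Finset.range (n + 1), (if r < l then q ^ ((l : ℤ) ^ 2 - l) * (1 - q ^ (2 * (l : ℤ)))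
        * (e q (p - l) * e q (p + l)) else 0) := by
  obtain ⟨s, rfl⟩ := Nat.exists_eq_add_of_le hr
  have := L4aux hq h p r s
  rw [e_neg q (by omega : (p : ℤ) - 1 - (r + s : ℕ) < 0)] at this
  rw [show r + s + 1 = r + 1 + s by ring, this]
  have z : q ^ (-(r : ℤ) ^ 2 - r) * q ^ ((r : ℤ) ^ 2 + r) = 1 := by
    rw [← zpow_add₀ hq]; ring_nf; simp
  linear_combination (-(e q (p - 1 - r) * e q (p + r))) * z

noncomputable def W (q : ℂ) (t : ℕ) (i : ℕ) (y x : ℕ) : ℂ :=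
  (if i < t then q ^ (-(y : ℤ) * x - y)
   else if i = t then q ^ (-(y : ℤ) * x) * (1 - q ^ ((x : ℤ) - y)) * ((-1) ^ x * q ^ (P x))
   else if i = t + 1 then 1
   else q ^ ((y : ℤ) ^ 2)) * e q (x - y)

noncomputable def V (q : ℂ) (t n : ℕ) : ℕ → ℕ → ℂ
  | 0, x => if x = 0 then 1 else 0
  | k + 1, x => ∑ y ∈ Finset.range (n + 1), W q t k y x * V q t n k y

noncomputable def c (q : ℂ) (k r : ℕ) : ℂ :=
  (-1 : ℂ) ^ r * q ^ (P r - k * ((r : ℤ) ^ 2 + r)) * (1 - q ^ (2 * (r : ℤ) + 1))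

lemma c_succ {q : ℂ} (hq : q ≠ 0) (k r : ℕ) :
    c q (k + 1) r = c q k r * q ^ (-(r : ℤ) ^ 2 - r) := by
  unfold c
  have : q ^ (P r - ((k + 1 : ℕ) : ℤ) * ((r : ℤ) ^ 2 + r))
      = q ^ (P r - k * ((r : ℤ) ^ 2 + r)) * q ^ (-(r : ℤ) ^ 2 - r) := by
    rw [← zpow_add₀ hq]; congr 1; push_cast; ring
  rw [this]; ring

lemma V_low {q : ℂ} (hq : q ≠ 0) (h : ∀ k : ℕ, q ^ (k + 1) ≠ 1) (t n k : ℕ) (hk : k ≤ t) :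
    ∀ x, x ≤ n → V q t n k x = (-1) ^ x * q ^ (P x + 2 * x) *
      ∑ r ∈ Finset.range (n + 1), c q k r * (e q (x - r) * e q (x + r + 1)) := by
  induction k with
  | zero =>
    intro x hx
    have A := L3 hq h n x hx
    simp only [c, V]
    simp only [Nat.cast_zero, zero_mul, sub_zero]
    rw [A]
    split_ifs with h0
    · subst h0; simp [P]
    · simp
  | succ k ih =>
    intro x hx
    rw [V]
    have s1 : ∀ y ∈ Finset.range (n + 1), W q t k y x * V q t n k y =
        ∑ r ∈ Finset.range (n + 1), c q k r * ((-1 : ℂ) ^ y * q ^ (P y + y - x * y) * e q (x - y)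
        * (e q (y - r) * e q (y + r + 1))) := by
      intro y hy
      rw [ih (by omega) y (by simp at hy; omega), W, if_pos (by omega), Finset.mul_sum,
        Finset.mul_sum]
      apply Finset.sum_congr rfl
      intro r _
      have z : q ^ (P y + y - x * y) = q ^ (-(y : ℤ) * x - y) * q ^ (P y + 2 * y) := by
        rw [← zpow_add₀ hq]; congr 1; ring
      rw [z]; ring
    rw [Finset.sum_congr rfl s1, Finset.sum_comm, Finset.mul_sum]
    apply Finset.sum_congr rfl
    intro r _
    rw [← Finset.mul_sum, L2 hq h n x r hx, c_succ hq]
    ring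

lemma V_mid {q : ℂ} (hq : q ≠ 0) (h : ∀ k : ℕ, q ^ (k + 1) ≠ 1) (t n p : ℕ) (hp : p ≤ n) :
    V q t n (t + 1) p = - q ^ ((p : ℤ) ^ 2 - 1) *
      ∑ r ∈ Finset.range (n + 1), c q (t + 1) r * (e q (p - 1 - r) * e q (p + r)) := by
  rw [V]
  cases p with
  | zero =>
    rw [Finset.sum_eq_zero, Finset.sum_eq_zero]
    · simp
    · intro r _
      rw [e_neg q (by omega : ((0 : ℕ) : ℤ) - 1 - r < 0)]; ring
    · intro y _
      rw [W, if_neg (by omega), if_pos rfl]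
      rcases Nat.eq_zero_or_pos y with hy | hy
      · subst hy; simp
      · rw [e_neg q (by omega : ((0 : ℕ) : ℤ) - y < 0)]; ring
  | succ M =>
    have s1 : ∀ y ∈ Finset.range (n + 1), W q t t y (M + 1) * V q t n t y =
        ∑ r ∈ Finset.range (n + 1), ((-1) ^ (M + 1) * q ^ (P (M + 1 : ℕ)) * c q t r) *
        ((-1 : ℂ) ^ y * q ^ (P y + y - M * y) * e q (M - y)
        * (e q (y - r) * e q (y + r + 1))) := by
      intro y hy
      rw [V_low hq h t n t le_rfl y (by simp at hy; omega), W, if_neg (by omega), if_pos rfl,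
        Finset.mul_sum, Finset.mul_sum]
      apply Finset.sum_congr rfl
      intro r _
      have z : q ^ (P y + y - M * y) = q ^ (-(y : ℤ) * (M + 1 : ℕ)) * q ^ (P y + 2 * y) := by
        rw [← zpow_add₀ hq]; congr 1; push_cast; ring
      have r1 := e_rec h ((M + 1 : ℕ) - y)
      have a1 : ((M + 1 : ℕ) : ℤ) - y - 1 = M - y := by push_cast; ring
      rw [a1] at r1
      rw [z, ← r1]; ring
    rw [Finset.sum_congr rfl s1, Finset.sum_comm, Finset.mul_sum]
    apply Finset.sum_congr rfl
    intro r _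
    rw [← Finset.mul_sum, L2 hq h n M r (by omega), c_succ hq]
    have a1 : ((M + 1 : ℕ) : ℤ) - 1 - r = M - r := by push_cast; ring
    have a2 : ((M + 1 : ℕ) : ℤ) + r = M + r + 1 := by push_cast; ring
    have z : q ^ (((M + 1 : ℕ) : ℤ) ^ 2 - 1) = q ^ (P (M + 1 : ℕ)) * q ^ (P M + 2 * M) := by
      rw [← zpow_add₀ hq]; congr 1
      have p1 := two_P M
      have p2 := two_P (M + 1 : ℕ)
      push_cast at *
      linarith
    have sg : (-1 : ℂ) ^ (M + 1) * (-1) ^ M = -1 := by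
      rw [← pow_add]; exact Odd.neg_one_pow ⟨M, by ring⟩
    rw [a1, a2, z]
    linear_combination (q ^ (P (M + 1 : ℕ)) * c q t r * q ^ (-(r : ℤ) ^ 2 - r) * q ^ (P M + 2 * M)
      * (e q (M - r) * e q (M + r + 1))) * sg

noncomputable def al (q : ℂ) (t l : ℕ) : ℂ :=
  q ^ (2 * (l : ℤ) ^ 2 - l) * (1 - q ^ (2 * (l : ℤ))) *
    ∑ k ∈ Finset.Icc (-(l : ℤ)) ((l : ℤ) - 1),
          (-1 : ℂ) ^ k * q ^ (-(2 * (t : ℤ) + 3) * k * (k + 1) / 2 + k)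

lemma ksum {q : ℂ} (hq : q ≠ 0) (t l : ℕ) :
    ∑ k ∈ Finset.Icc (-(l : ℤ)) ((l : ℤ) - 1),
          (-1 : ℂ) ^ k * q ^ (-(2 * (t : ℤ) + 3) * k * (k + 1) / 2 + k)
      = - ∑ r ∈ Finset.range l, c q (t + 1) r * q ^ (-(r : ℤ) ^ 2 - r - 1) := by
  induction l with
  | zero => simp
  | succ l ih =>
    have hI : Finset.Icc (-((l + 1 : ℕ) : ℤ)) (((l + 1 : ℕ) : ℤ) - 1)
        = insert (-((l : ℤ) + 1)) (insert (l : ℤ) (Finset.Icc (-(l : ℤ)) ((l : ℤ) - 1))) := by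
      ext x; simp only [Finset.mem_Icc, Finset.mem_insert]; push_cast; omega
    rw [hI, Finset.sum_insert, Finset.sum_insert, ih, Finset.sum_range_succ]
    · have e1 : -(2 * (t : ℤ) + 3) * l * (l + 1) / 2 = -(2 * t + 3) * (P l + l) := by
        have p1 := two_P l
        rw [show -(2 * (t : ℤ) + 3) * l * (l + 1) = (-(2 * t + 3) * (P l + l)) * 2 by
          linear_combination (2 * (t : ℤ) + 3) * p1]
        exact Int.mul_ediv_cancel _ (by norm_num)
      have e2 : -(2 * (t : ℤ) + 3) * (-((l : ℤ) + 1)) * (-((l : ℤ) + 1) + 1) / 2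
          = -(2 * t + 3) * (P l + l) := by
        rw [← e1]; congr 1; ring
      rw [e1, e2, c]
      have s1 : (-1 : ℂ) ^ (l : ℤ) = (-1) ^ l := zpow_natCast _ _
      have s2 : (-1 : ℂ) ^ (-((l : ℤ) + 1)) = -(-1) ^ l := by
        rw [zpow_neg, zpow_add_one₀ (by norm_num), s1]
        rcases Nat.even_or_odd l with h | h
        · rw [h.neg_one_pow]; norm_num
        · rw [h.neg_one_pow]; norm_num
      have p1 := two_P l
      have z1 : q ^ (-(2 * (t : ℤ) + 3) * (P l + l) + -((l : ℤ) + 1))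
          = q ^ (P l - ((t + 1 : ℕ) : ℤ) * ((l : ℤ) ^ 2 + l)) * q ^ (-(l : ℤ) ^ 2 - l - 1) := by
        rw [← zpow_add₀ hq]; congr 1; push_cast
        linear_combination (-(t : ℤ) - 2) * p1
      have z2 : q ^ (-(2 * (t : ℤ) + 3) * (P l + l) + (l : ℤ))
          = q ^ (P l - ((t + 1 : ℕ) : ℤ) * ((l : ℤ) ^ 2 + l)) * q ^ (-(l : ℤ) ^ 2 - l - 1)
            * q ^ (2 * (l : ℤ) + 1) := by
        rw [← zpow_add₀ hq, ← zpow_add₀ hq]; congr 1; push_cast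
        linear_combination (-(t : ℤ) - 2) * p1
      rw [s1, s2, z1, z2]
      ring
    · simp
    · simp only [Finset.mem_Icc, Finset.mem_insert]; omega

lemma V_top {q : ℂ} (hq : q ≠ 0) (h : ∀ k : ℕ, q ^ (k + 1) ≠ 1) (t n N : ℕ) (hN : N ≤ n) :
    V q t n (t + 2) N = ∑ l ∈ Finset.range (n + 1), al q t l * (e q (N - l) * e q (N + l)) := by
  rw [V]
  have s1 : ∀ p ∈ Finset.range (n + 1), W q t (t + 1) p N * V q t n (t + 1) p =
      ∑ l ∈ Finset.range (n + 1), ∑ r ∈ Finset.range (n + 1),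
        (if r < l then - (c q (t + 1) r * q ^ (-(r : ℤ) ^ 2 - r - 1)) * (q ^ ((l : ℤ) ^ 2 - l)
          * (1 - q ^ (2 * (l : ℤ)))) else 0) *
        (q ^ ((p : ℤ) ^ 2) * e q (N - p) * (e q (p - l) * e q (p + l))) := by
    intro p hp
    rw [V_mid hq h t n p (by simp at hp; omega), W, if_neg (by omega), if_neg (by omega),
      if_pos rfl, Finset.sum_comm, Finset.mul_sum, Finset.mul_sum]
    apply Finset.sum_congr rfl
    intro r hr
    rw [L4 hq h n p r (by simp at hp; omega) (by simp at hr; omega), Finset.mul_sum,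
      Finset.mul_sum, Finset.mul_sum, Finset.mul_sum]
    apply Finset.sum_congr rfl
    intro l _
    split_ifs
    · have z1 : q ^ ((p : ℤ) ^ 2 - 1) * q ^ (-(r : ℤ) ^ 2 - r)
          = q ^ ((p : ℤ) ^ 2) * q ^ (-(r : ℤ) ^ 2 - r - 1) := by
        rw [← zpow_add₀ hq, ← zpow_add₀ hq]; congr 1; ring
      linear_combination (-(e q (N - p) * c q (t + 1) r * (q ^ ((l : ℤ) ^ 2 - l)
          * (1 - q ^ (2 * (l : ℤ)))) * (e q (p - l) * e q (p + l)))) * z1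
    · ring
  rw [Finset.sum_congr rfl s1, Finset.sum_comm]
  apply Finset.sum_congr rfl
  intro l hl
  rw [Finset.sum_comm]
  have s2 : ∀ r ∈ Finset.range (n + 1), ∑ p ∈ Finset.range (n + 1),
        (if r < l then - (c q (t + 1) r * q ^ (-(r : ℤ) ^ 2 - r - 1)) * (q ^ ((l : ℤ) ^ 2 - l)
          * (1 - q ^ (2 * (l : ℤ)))) else 0) *
        (q ^ ((p : ℤ) ^ 2) * e q (N - p) * (e q (p - l) * e q (p + l)))
      = (if r < l then (c q (t + 1) r * q ^ (-(r : ℤ) ^ 2 - r - 1)) else 0) *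
        (-(q ^ ((l : ℤ) ^ 2 - l) * (1 - q ^ (2 * (l : ℤ))) *
          (q ^ ((l : ℤ) ^ 2) * (e q (N - l) * e q (N + l))))) := by
    intro r _
    rw [← Finset.mul_sum, L1 hq h n N l hN]
    split_ifs <;> ring
  rw [Finset.sum_congr rfl s2, ← Finset.sum_mul, al, ksum hq]
  have s3 : ∑ r ∈ Finset.range (n + 1),
      (if r < l then (c q (t + 1) r * q ^ (-(r : ℤ) ^ 2 - r - 1)) else 0)
      = ∑ r ∈ Finset.range l, c q (t + 1) r * q ^ (-(r : ℤ) ^ 2 - r - 1) := by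
    rw [← Finset.sum_filter]
    congr 1
    ext r; simp at hl ⊢; omega
  rw [s3]
  have z : q ^ (2 * (l : ℤ) ^ 2 - l) = q ^ ((l : ℤ) ^ 2 - l) * q ^ ((l : ℤ) ^ 2) := by
    rw [← zpow_add₀ hq]; congr 1; ring
  rw [z]; ring

lemma V_high {q : ℂ} (hq : q ≠ 0) (h : ∀ k : ℕ, q ^ (k + 1) ≠ 1) (t n s : ℕ) :
    ∀ N, N ≤ n → V q t n (t + 2 + s) N = ∑ l ∈ Finset.range (n + 1),
      q ^ ((s : ℤ) * (l : ℤ) ^ 2) * al q t l * (e q (N - l) * e q (N + l)) := by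
  induction s with
  | zero => intro N hN; simpa using V_top hq h t n N hN
  | succ s ih =>
    intro N hN
    rw [← add_assoc, V]
    have s1 : ∀ y ∈ Finset.range (n + 1), W q t (t + 2 + s) y N * V q t n (t + 2 + s) y =
      ∑ l ∈ Finset.range (n + 1), (q ^ ((s : ℤ) * (l : ℤ) ^ 2) * al q t l) *
        (q ^ ((y : ℤ) ^ 2) * e q (N - y) * (e q (y - l) * e q (y + l))) := by
      intro y hy
      rw [ih y (by simp at hy; omega), W, if_neg (by omega), if_neg (by omega), if_neg (by omega),
        Finset.mul_sum]
      apply Finset.sum_congr rfl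
      intro l _
      ring
    rw [Finset.sum_congr rfl s1, Finset.sum_comm]
    apply Finset.sum_congr rfl
    intro l _
    rw [← Finset.mul_sum, L1 hq h n N l hN]
    have z : q ^ (((s + 1 : ℕ) : ℤ) * (l : ℤ) ^ 2) = q ^ ((s : ℤ) * (l : ℤ) ^ 2) * q ^ ((l : ℤ) ^ 2) := by
      rw [← zpow_add₀ hq]; congr 1; push_cast; ring
    rw [z]; ring

lemma lhs_eq {q : ℂ} (hq : q ≠ 0) (h : ∀ k : ℕ, q ^ (k + 1) ≠ 1) (t n : ℕ) :
    (∑ l ∈ Finset.range (n + 1),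
      q ^ ((t + 2) * l ^ 2 - l) * (1 - q ^ (2 * l)) /
          (qPoch q q (n - l) * qPoch q q (n + l)) *
        ∑ k ∈ Finset.Icc (-(l : ℤ)) ((l : ℤ) - 1),
          (-1 : ℂ) ^ k * q ^ (-(2 * (t : ℤ) + 3) * k * (k + 1) / 2 + k)) =
    V q t n (2 * t + 2) n := by
  rw [show 2 * t + 2 = t + 2 + t by ring, V_high hq h t n t n le_rfl]
  apply Finset.sum_congr rfl
  intro l hl
  have hl' : l ≤ n := by simp at hl; omega
  have a1 : (n : ℤ) - l = ((n - l : ℕ) : ℤ) := by push_cast [hl']; ring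
  have a2 : (n : ℤ) + l = ((n + l : ℕ) : ℤ) := by push_cast; ring
  rw [a1, a2, e_nat, e_nat, al]
  have z1 : q ^ ((t + 2) * l ^ 2 - l) = q ^ ((t : ℤ) * (l : ℤ) ^ 2) * q ^ (2 * (l : ℤ) ^ 2 - l) := by
    rw [← zpow_add₀ hq, ← zpow_natCast]
    congr 1
    have : l ≤ (t + 2) * l ^ 2 :=
      (Nat.le_self_pow two_ne_zero l).trans (Nat.le_mul_of_pos_left _ (by omega))
    push_cast [this]
    ring
  have z2 : q ^ (2 * l) = q ^ (2 * (l : ℤ)) := by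
    rw [← zpow_natCast]; push_cast; rfl
  rw [z1, z2, div_eq_mul_inv, mul_inv]
  ring

def b {n : ℕ} (k : ℕ) (a : Fin k → Fin (n + 1)) (x : ℕ) (j : ℕ) : ℕ :=
  if j = 0 then 0 else if h : j - 1 < k then (a ⟨j - 1, h⟩ : ℕ) else x

lemma T_eq (q : ℂ) (t n k : ℕ) : ∀ x,
    ∑ a : Fin k → Fin (n + 1), ∏ i ∈ Finset.range (k + 1), W q t i (b k a x i) (b k a x (i + 1))
      = V q t n (k + 1) x := by
  induction k with
  | zero =>
    intro x
    simp [b, V]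
  | succ k ih =>
    intro x
    rw [V, ← (Fin.snocEquiv (fun _ : Fin (k + 1) => Fin (n + 1))).sum_comp,
      Fintype.sum_prod_type, Finset.sum_range]
    apply Finset.sum_congr rfl
    intro y _
    rw [← ih, Finset.mul_sum]
    apply Finset.sum_congr rfl
    intro a _
    have hb : ∀ j, j ≤ k + 1 →
        b (k + 1) (Fin.snocEquiv (fun _ : Fin (k + 1) => Fin (n + 1)) (y, a)) x j
          = b k a (y : ℕ) j := by
      intro j hj
      unfold b
      by_cases h0 : j = 0
      · simp [h0]
      · rw [if_neg h0, if_neg h0, dif_pos (by omega)]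
        by_cases h1 : j - 1 < k
        · rw [dif_pos h1]
          simp [Fin.snocEquiv, Fin.snoc, h1]
        · rw [dif_neg h1]
          simp [Fin.snocEquiv, Fin.snoc, h1]
    rw [Finset.prod_range_succ, mul_comm]
    congr 1
    · rw [hb _ le_rfl]
      congr 1
      · simp [b]
      · simp [b]
    · apply Finset.prod_congr rfl
      intro i hi
      simp at hi
      rw [hb i (by omega), hb (i + 1) (by omega)]

lemma prod_zpow' {q : ℂ} (hq : q ≠ 0) (f : ℕ → ℤ) (s : ℕ) :
    ∏ i ∈ Finset.range s, q ^ (f i) = q ^ (∑ i ∈ Finset.range s, f i) := by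
  induction s with
  | zero => simp
  | succ s ih => rw [Finset.prod_range_succ, Finset.sum_range_succ, ih, zpow_add₀ hq]

lemma prodW {q : ℂ} (hq : q ≠ 0) (t n : ℕ) (A B : ℕ → ℕ) (hB0 : B 0 = 0)
    (hB : ∀ j, j < 2 * t + 1 → B (j + 1) = A j) (hBn : B (2 * t + 2) = n)
    (hm : ∀ j, j < 2 * t → A j ≤ A (j + 1)) (hn : A (2 * t) ≤ n) :
    ∏ i ∈ Finset.range (2 * t + 2), W q t i (B i) (B (i + 1)) = CTerm q t n A := by
  have hE : ∏ i ∈ Finset.range (2 * t + 2), e q ((B (i + 1) : ℤ) - B i)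
      = (qPoch q q (n - A (2 * t)) *
    (∏ i ∈ Finset.range (2 * t), qPoch q q (A (i + 1) - A i)) *
    qPoch q q (A 0))⁻¹ := by
    rw [Finset.prod_range_succ, Finset.prod_range_succ', hBn, hB0, hB 0 (by omega),
      hB (2 * t) (by omega)]
    have a1 : (n : ℤ) - A (2 * t) = ((n - A (2 * t) : ℕ) : ℤ) := by push_cast [hn]; ring
    rw [a1, e_nat, Nat.cast_zero, sub_zero, e_nat, mul_inv, mul_inv, ← Finset.prod_inv_distrib]
    have : ∏ i ∈ Finset.range (2 * t), e q ((B (i + 1 + 1) : ℤ) - B (i + 1))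
        = ∏ i ∈ Finset.range (2 * t), (qPoch q q (A (i + 1) - A i))⁻¹ := by
      apply Finset.prod_congr rfl
      intro i hi
      simp at hi
      rw [hB i (by omega), hB (i + 1) (by omega), ← e_nat]
      congr 1
      have := hm i hi
      push_cast [this]; ring
    rw [this]; ring
  have hW : ∏ i ∈ Finset.range (2 * t + 2),
      (if i < t then q ^ (-(B i : ℤ) * B (i + 1) - B i)
       else if i = t then q ^ (-(B i : ℤ) * B (i + 1)) * (1 - q ^ ((B (i + 1) : ℤ) - B i))
          * ((-1) ^ B (i + 1) * q ^ (P (B (i + 1))))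
       else if i = t + 1 then 1
       else q ^ ((B i : ℤ) ^ 2))
      = q ^ (∑ i ∈ Finset.range t, (-(B i : ℤ) * B (i + 1) - B i)) *
        (q ^ (-(B t : ℤ) * B (t + 1)) * (1 - q ^ ((B (t + 1) : ℤ) - B t))
          * ((-1) ^ B (t + 1) * q ^ (P (B (t + 1))))) *
        q ^ (∑ i ∈ Finset.range t, (B (t + 2 + i) : ℤ) ^ 2) := by
    rw [show 2 * t + 2 = t + 1 + 1 + t by ring, Finset.prod_range_add, Finset.prod_range_succ,
      Finset.prod_range_succ, if_neg (by omega), if_pos rfl, if_neg (by omega), if_neg (by omega),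
      if_pos rfl, mul_one, ← prod_zpow' hq, ← prod_zpow' hq]
    congr 1
    · congr 1
      apply Finset.prod_congr rfl
      intro i hi
      simp at hi
      rw [if_pos hi]
    · apply Finset.prod_congr rfl
      intro i hi
      rw [if_neg (by omega), if_neg (by omega), if_neg (by omega)]
  have s1 : (∑ i ∈ Finset.range t, (-(B i : ℤ) * B (i + 1) - B i)) + (-(B t : ℤ) * B (t + 1))
      = - (∑ i ∈ Finset.range t, (A i : ℤ) * (A (i + 1) : ℤ))
        - (∑ i ∈ Finset.range (t - 1), (A i : ℤ)) := by
    have u1 : ∑ i ∈ Finset.range (t + 1), (B i : ℤ) * B (i + 1)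
        = ∑ i ∈ Finset.range t, (A i : ℤ) * (A (i + 1) : ℤ) := by
      rw [Finset.sum_range_succ', hB0]
      simp only [Nat.cast_zero, zero_mul, add_zero]
      apply Finset.sum_congr rfl
      intro i hi
      simp at hi
      rw [hB i (by omega), hB (i + 1) (by omega)]
    have u2 : ∑ i ∈ Finset.range t, (B i : ℤ) = ∑ i ∈ Finset.range (t - 1), (A i : ℤ) := by
      cases t with
      | zero => simp
      | succ s =>
        rw [Finset.sum_range_succ', hB0]
        simp only [Nat.cast_zero, add_zero, Nat.add_sub_cancel]
        apply Finset.sum_congr rfl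
        intro i hi
        simp at hi
        rw [hB i (by omega)]
    rw [← u1, ← u2, Finset.sum_range_succ, Finset.sum_sub_distrib]
    have u3 : ∑ i ∈ Finset.range t, (-(B i : ℤ) * B (i + 1))
        = - ∑ i ∈ Finset.range t, ((B i : ℤ) * B (i + 1)) := by
      rw [← Finset.sum_neg_distrib]
      apply Finset.sum_congr rfl
      intro i _; ring
    rw [u3]; ring
  have s2 : ∑ i ∈ Finset.range t, (B (t + 2 + i) : ℤ) ^ 2
      = ∑ i ∈ Finset.range t, (A (t + 1 + i) : ℤ) ^ 2 := by
    apply Finset.sum_congr rfl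
    intro i hi
    simp at hi
    rw [show t + 2 + i = t + 1 + i + 1 by ring, hB (t + 1 + i) (by omega)]
  have s3 : (if 1 ≤ t then (A (t - 1) : ℤ) else 0) = B t := by
    cases t with
    | zero => simp [hB0]
    | succ s => simp [hB s (by omega)]
  have s4 : q ^ (∑ i ∈ Finset.range t, (-(B i : ℤ) * B (i + 1) - B i))
      * q ^ (-(B t : ℤ) * B (t + 1)) * q ^ (P (A t))
      * q ^ (∑ i ∈ Finset.range t, (A (t + 1 + i) : ℤ) ^ 2)
      = q ^ ((∑ i ∈ Finset.range t, (A (t + 1 + i) : ℤ) ^ 2)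
      + (A t : ℤ) * ((A t : ℤ) - 1) / 2
      - (∑ i ∈ Finset.range t, (A i : ℤ) * (A (i + 1) : ℤ))
      - (∑ i ∈ Finset.range (t - 1), (A i : ℤ))) := by
    rw [← zpow_add₀ hq, s1, ← zpow_add₀ hq, ← zpow_add₀ hq]
    congr 1
    unfold P
    ring
  unfold W
  rw [Finset.prod_mul_distrib, hE, hW, CTerm, s3, ← s4, s2, hB t (by omega), div_eq_mul_inv]
  ring

end CJ

/-- the multisum expression for `-q^{t-n} C_{n-1}(T*_{(2,2t+1)};q)`
(the paper's `t` is `t+1` here, so `t+1 = T`, `2T+1 = 2t+3`, `T+1 = t+2`). -/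
theorem stmt3 (t n : ℕ) (hn : 1 ≤ n) (q : ℂ)
    (hq0 : 0 < ‖q‖) (hq1 : ‖q‖ < 1) :
    (∑ l ∈ Finset.range (n + 1),
      q ^ ((t + 2) * l ^ 2 - l) * (1 - q ^ (2 * l)) /
          (qPoch q q (n - l) * qPoch q q (n + l)) *
        ∑ k ∈ Finset.Icc (-(l : ℤ)) ((l : ℤ) - 1),
          (-1 : ℂ) ^ k * q ^ (-(2 * (t : ℤ) + 3) * k * (k + 1) / 2 + k)) =
    ∑ a ∈ Finset.univ.filter
        (fun a : Fin (2 * t + 1) → Fin (n + 1) => ∀ i : Fin (2 * t), a i.castSucc ≤ a i.succ),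
      CTerm q t n (fun j => if h : j < 2 * t + 1 then (a ⟨j, h⟩ : ℕ) else 0) := by
  have hq : q ≠ 0 := by
    intro h; simp [h] at hq0
  have h : ∀ k : ℕ, q ^ (k + 1) ≠ 1 := by
    intro k hk
    have h1 : ‖q‖ ^ (k + 1) = 1 := by rw [← norm_pow, hk, norm_one]
    have h2 := pow_lt_one₀ hq0.le hq1 (Nat.succ_ne_zero k)
    exact absurd h1 h2.ne
  rw [CJ.lhs_eq hq h t n, ← CJ.T_eq q t n (2 * t + 1) n, Finset.sum_filter]
  apply Finset.sum_congr rfl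
  intro a _
  split_ifs with hmon
  · apply CJ.prodW hq
    · simp [CJ.b]
    · intro j hj
      simp [CJ.b, hj]
    · simp [CJ.b]
    · intro j hj
      have := hmon ⟨j, hj⟩
      rw [dif_pos (by omega), dif_pos (by omega)]
      exact this
    · rw [dif_pos (by omega)]
      omega
  · push Not at hmon
    obtain ⟨i, hi⟩ := hmon
    apply Finset.prod_eq_zero (i := (i : ℕ) + 1)
    · simp only [Finset.mem_range]; omega
    · unfold CJ.W
      have b1 : CJ.b (2 * t + 1) a n ((i : ℕ) + 1) = (a i.castSucc : ℕ) := by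
        unfold CJ.b
        rw [if_neg (by omega), dif_pos (by omega)]
        rfl
      have b2 : CJ.b (2 * t + 1) a n ((i : ℕ) + 1 + 1) = (a i.succ : ℕ) := by
        unfold CJ.b
        rw [if_neg (by omega), dif_pos (by omega)]
        rfl
      rw [b1, b2, CJ.e_neg q, mul_zero]
      have : (a i.succ : ℕ) < (a i.castSucc : ℕ) := hi
      omega
end
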